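/- Let Γ = ℤ^5 ⋊ ℤ/8 where the generator of ℤ/8 acts on ℤ^5 by the matrix [[0,0,0,0,-1],[1,0,0,0,-1],[0,1,0,0,0],[0,0,1,0,0],[0,0,0,1,-1]], and let G = ℤ/8, L = ℤ^5 with this action. Then there exists k ≥ 0 such that H^k(Γ, ℤ) is not isomorphic to ⊕_{i+j=k} H^i(G, H^j(L, ℤ)). -/

import Mathlib

open Matrix

namespace Crystal

/-- The lattice `ℤ^n`, written multiplicatively so that it can be a factor of a semidirect
product of groups. -/
abbrev Lat (n : ℕ) : Type := Multiplicative (Fin n → ℤ)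

/-- The invertible integer matrix determined by `M` with `M ^ (m + 1) = 1`. -/
def matUnit {n : ℕ} (M : Matrix (Fin n) (Fin n) ℤ) (m : ℕ) (hm : M ^ (m + 1) = 1) :
    (Matrix (Fin n) (Fin n) ℤ)ˣ :=
  ⟨M, M ^ m, by rw [← pow_succ']; exact hm, by rw [← pow_succ]; exact hm⟩

/-- Linear automorphisms of `ℤ^n` as multiplicative automorphisms of the multiplicative
version of `ℤ^n`. -/
def linToAut (n : ℕ) : ((Fin n → ℤ) ≃ₗ[ℤ] (Fin n → ℤ)) →* MulAut (Lat n) :=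
  MonoidHom.mk' (fun e => AddEquiv.toMultiplicative e.toAddEquiv) (fun _ _ => rfl)

/-- An invertible integer matrix acts on the (multiplicative) lattice `ℤ^n` by (left)
matrix-vector multiplication. -/
def glToAut (n : ℕ) : (Matrix (Fin n) (Fin n) ℤ)ˣ →* MulAut (Lat n) :=
  (linToAut n).comp
    ((LinearMap.GeneralLinearGroup.generalLinearEquiv ℤ (Fin n → ℤ)).toMonoidHom.comp
      (Matrix.GeneralLinearGroup.toLin).toMonoidHom)

/-- The homomorphism from `ℤ/m` (written multiplicatively) to a group `G` sending the
generator `1` to a chosen element `α` satisfying `α ^ m = 1`. -/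
def zmodHom {G : Type*} [Group G] (m : ℕ) [NeZero m] (α : G) (hα : α ^ m = 1) :
    Multiplicative (ZMod m) →* G :=
  MonoidHom.mk' (fun g => α ^ (g.toAdd.val)) (by
    intro a b
    show α ^ (ZMod.val (a.toAdd + b.toAdd)) = α ^ (ZMod.val a.toAdd) * α ^ (ZMod.val b.toAdd)
    rw [ZMod.val_add, ← pow_eq_pow_mod _ hα, pow_add])

/-- The action of `ℤ/q` on the lattice `ℤ^n` in which the generator `1` of `ℤ/q` acts by left
multiplication by the integer matrix `M`; `M` is required to satisfy `M ^ q = 1`. -/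
def matAction {n : ℕ} (q : ℕ) [NeZero q] (M : Matrix (Fin n) (Fin n) ℤ)
    (hq : M ^ q = 1) : Multiplicative (ZMod q) →* MulAut (Lat n) :=
  zmodHom q (glToAut n (matUnit M (q - 1) (by
      rwa [Nat.sub_add_cancel (Nat.one_le_iff_ne_zero.2 (NeZero.ne q))])))
    (by
      rw [← map_pow]
      convert map_one (glToAut n)
      ext i j
      rw [Units.val_pow_eq_pow_val]
      simp [matUnit, hq])

/-- The crystallographic group `ℤ^n ⋊ ℤ/q` in which the generator `1` of `ℤ/q` acts on the
lattice `ℤ^n` by left multiplication by the integer matrix `M` (with `M ^ q = 1`). -/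
abbrev Crys {n : ℕ} (q : ℕ) [NeZero q] (M : Matrix (Fin n) (Fin n) ℤ) (hq : M ^ q = 1) : Type :=
  SemidirectProduct (Lat n) (Multiplicative (ZMod q)) (matAction q M hq)


open CategoryTheory groupCohomology

variable {k : Type} [CommRing k]

lemma comp_contractNth {G H : Type*} [Monoid G] [Monoid H] (f : G →* H) {n : ℕ}
    (j : Fin (n + 1)) (g : Fin (n + 1) → G) (i : Fin n) :
    f (Fin.contractNth j (· * ·) g i) = Fin.contractNth j (· * ·) (fun l => f (g l)) i := by
  rcases lt_trichotomy (i : ℕ) j with h | h | h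
  · rw [Fin.contractNth_apply_of_lt _ _ _ _ h, Fin.contractNth_apply_of_lt _ _ _ _ h]
  · rw [Fin.contractNth_apply_of_eq _ _ _ _ h, Fin.contractNth_apply_of_eq _ _ _ _ h,
      _root_.map_mul]
  · rw [Fin.contractNth_apply_of_gt _ _ _ _ h, Fin.contractNth_apply_of_gt _ _ _ _ h]

/-- The map of inhomogeneous cochain complexes induced (contravariantly in the group,
covariantly in the coefficients) by a group homomorphism `f : H →* G` together with a
compatible linear map `τ : A → B` of coefficients. -/
def cochainsMap {G H : Type} [Group G] [Group H] (A : Rep k G) (B : Rep k H)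
    (f : H →* G) (τ : A →ₗ[k] B)
    (hcomp : ∀ (h : H) (a : A), τ (A.ρ (f h) a) = B.ρ h (τ a)) :
    inhomogeneousCochains A ⟶ inhomogeneousCochains B where
  f n := ModuleCat.ofHom
    { toFun := fun F v => τ (F (fun i => f (v i)))
      map_add' := fun x y => by funext v; simp
      map_smul' := fun r x => by funext v; simp }
  comm' i j hij := by
    have hij' : i + 1 = j := hij
    subst hij'
    rw [inhomogeneousCochains.d_def, inhomogeneousCochains.d_def]
    ext F v
    show (inhomogeneousCochains.d B i).hom (fun w => τ (F (fun l => f (w l)))) v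
      = τ ((inhomogeneousCochains.d A i).hom F (fun l => f (v l)))
    simp only [inhomogeneousCochains.d_hom_apply, map_add, map_sum, _root_.map_smul]
    congr 1
    · exact (hcomp (v 0) _).symm
    · refine Finset.sum_congr rfl fun j' _ => ?_
      have hc : (fun l => f (j'.contractNth (· * ·) v l))
          = j'.contractNth (· * ·) (fun l => f (v l)) := by
        funext l
        exact comp_contractNth f j' v l
      rw [hc]

lemma cochainsMap_eq_id {G : Type} [Group G] (A : Rep k G) (f : G →* G) (τ : A →ₗ[k] A)
    (hcomp : ∀ (h : G) (a : A), τ (A.ρ (f h) a) = A.ρ h (τ a))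
    (hf : ∀ x, f x = x) (hτ : ∀ a, τ a = a) :
    cochainsMap A A f τ hcomp = 𝟙 _ := by
  apply HomologicalComplex.Hom.ext
  funext n
  ext F v
  show τ (F (fun i => f (v i))) = F v
  simp only [hf, hτ]

lemma cochainsMap_comp {G H K : Type} [Group G] [Group H] [Group K]
    (A : Rep k G) (B : Rep k H) (C : Rep k K)
    (f₁ : H →* G) (τ₁ : A →ₗ[k] B) (h₁ : ∀ (h : H) (a : A), τ₁ (A.ρ (f₁ h) a) = B.ρ h (τ₁ a))
    (f₂ : K →* H) (τ₂ : B →ₗ[k] C) (h₂ : ∀ (h : K) (a : B), τ₂ (B.ρ (f₂ h) a) = C.ρ h (τ₂ a))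
    (f₃ : K →* G) (τ₃ : A →ₗ[k] C) (h₃ : ∀ (h : K) (a : A), τ₃ (A.ρ (f₃ h) a) = C.ρ h (τ₃ a))
    (hf : ∀ x, f₁ (f₂ x) = f₃ x) (hτ : ∀ a, τ₂ (τ₁ a) = τ₃ a) :
    cochainsMap A B f₁ τ₁ h₁ ≫ cochainsMap B C f₂ τ₂ h₂ = cochainsMap A C f₃ τ₃ h₃ := by
  apply HomologicalComplex.Hom.ext
  funext n
  ext F v
  show τ₂ (τ₁ (F (fun i => f₁ (f₂ (v i))))) = τ₃ (F (fun i => f₃ (v i)))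
  simp only [hf]
  exact hτ _

/-- Given an action `φ` of a group `G` on a group `L` and a representation `ψ` of `G` on a
`k`-module `V`, this is `H^j(L, V)` (with `L` acting trivially on the coefficients `V`),
endowed with the `G`-action functorially induced by the action of `G` on `L` and on `V`:
`g` acts via the conjugation automorphism `φ g⁻¹` of `L` and via `ψ g` on `V`. -/
noncomputable def cohRep {G L V : Type} [Group G] [Group L] [AddCommGroup V] [Module k V]
    (φ : G →* MulAut L) (ψ : Representation k G V) (j : ℕ) : Rep k G :=
  Rep.of (X := groupCohomology (Rep.trivial k L V) j)
    { toFun := fun g => ModuleCat.Hom.hom <| HomologicalComplex.homologyMap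
        (cochainsMap (Rep.trivial k L V) (Rep.trivial k L V) (φ g⁻¹).toMonoidHom (ψ g)
          (fun _ _ => rfl)) j
      map_one' := by
        have h := cochainsMap_eq_id (Rep.trivial k L V) (φ 1⁻¹).toMonoidHom (ψ 1)
          (fun _ _ => rfl) (fun x => by simp) (fun a => by simp)
        exact (congrArg (fun c => ModuleCat.Hom.hom (HomologicalComplex.homologyMap c j)) h).trans
          (congrArg ModuleCat.Hom.hom (HomologicalComplex.homologyMap_id _ j))
      map_mul' := fun g₁ g₂ => by
        have h := cochainsMap_comp (Rep.trivial k L V) (Rep.trivial k L V) (Rep.trivial k L V)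
          (φ g₂⁻¹).toMonoidHom (ψ g₂) (fun _ _ => rfl)
          (φ g₁⁻¹).toMonoidHom (ψ g₁) (fun _ _ => rfl)
          (φ (g₁ * g₂)⁻¹).toMonoidHom (ψ (g₁ * g₂)) (fun _ _ => rfl)
          (fun x => by simp [_root_.mul_inv_rev]) (fun a => by simp)
        rw [← h, HomologicalComplex.homologyMap_comp]
        rfl }


/-- `H^i(G, H^j(L, ℤ))`: the `i`-th cohomology of the cyclic group `ℤ/q` with coefficients in
the `j`-th cohomology of the lattice `ℤ^n` (with trivial `ℤ` coefficients), where the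
`ℤ/q`-action on `H^j(ℤ^n, ℤ)` is the one functorially induced by the matrix action on the
lattice. -/
noncomputable abbrev cohOfCoh {n : ℕ} (q : ℕ) [NeZero q] (M : Matrix (Fin n) (Fin n) ℤ)
    (hq : M ^ q = 1) (i j : ℕ) : ModuleCat ℤ :=
  groupCohomology
    (cohRep (matAction q M hq) (1 : Representation ℤ (Multiplicative (ZMod q)) ℤ) j) i

/-- `H^k(Γ, ℤ)` for `Γ = ℤ^n ⋊ ℤ/q`, with trivial coefficients `ℤ`. -/
noncomputable abbrev cohCrys {n : ℕ} (q : ℕ) [NeZero q] (M : Matrix (Fin n) (Fin n) ℤ)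
    (hq : M ^ q = 1) (k : ℕ) : ModuleCat ℤ :=
  groupCohomology (Rep.trivial ℤ (Crys q M hq) ℤ) k

end Crystal

/-- The holonomy matrix. -/
def holM : Matrix (Fin 5) (Fin 5) ℤ := !![0, 0, 0, 0, -1; 1, 0, 0, 0, -1; 0, 1, 0, 0, 0; 0, 0, 1, 0, 0; 0, 0, 0, 1, -1]

lemma holM_pow : holM ^ 8 = 1 := by decide

/-- `H^k(ℤ^5 ⋊ ℤ/8, ℤ)`, where the generator of `ℤ/8` acts on `ℤ^5` by left
multiplication by the matrix `holM`. -/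
noncomputable abbrev H (k : ℕ) : ModuleCat ℤ := Crystal.cohCrys 8 holM holM_pow k

/-- `H^i(ℤ/8, H^j(ℤ^5, ℤ))`, with the functorially induced action on coefficients. -/
noncomputable abbrev Hc (i j : ℕ) : ModuleCat ℤ := Crystal.cohOfCoh 8 holM holM_pow i j


section

namespace CE

section
variable {Γ A B : Type} [Group Γ] [AddCommGroup A] [AddCommGroup B]

/-- Elementary form of the inhomogeneous differential. -/
def cd (ρ : Representation ℤ Γ A) (n : ℕ) (F : (Fin n → Γ) → A) : (Fin (n + 1) → Γ) → A :=
  fun g => ρ (g 0) (F fun i => g i.succ) +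
    ∑ j : Fin (n + 1), (-1 : ℤ) ^ ((j : ℕ) + 1) • F (Fin.contractNth j (· * ·) g)

lemma cd_eq (ρ : Representation ℤ Γ A) (n : ℕ) (F : (Fin n → Γ) → A) :
    (inhomogeneousCochains.d (Rep.of ρ) n).hom F = cd ρ n F := by
  funext g
  rw [inhomogeneousCochains.d_hom_apply]
  rfl

lemma cd_cd (ρ : Representation ℤ Γ A) (n : ℕ) (F : (Fin n → Γ) → A) :
    cd ρ (n + 1) (cd ρ n F) = 0 := by
  have h := groupCohomology.inhomogeneousCochains.d_comp_d n (Rep.of ρ)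
  have h2 := congrArg (fun f => f.hom F) h
  rw [← cd_eq, ← cd_eq]
  exact h2

lemma cd_map (ρ : Representation ℤ Γ A) (σ : Representation ℤ Γ B) (f : A →ₗ[ℤ] B)
    (hf : ∀ g a, f (ρ g a) = σ g (f a)) (n : ℕ) (F : (Fin n → Γ) → A) :
    cd σ n (fun v => f (F v)) = fun v => f (cd ρ n F v) := by
  funext v
  simp [cd, hf]

lemma cd_sub (ρ : Representation ℤ Γ A) (n : ℕ) (F G : (Fin n → Γ) → A) :
    cd ρ n (F - G) = cd ρ n F - cd ρ n G := by
  rw [← cd_eq, ← cd_eq, ← cd_eq, map_sub]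

/-- left slice -/
def sl {n : ℕ} (F : (Fin (n + 1) → Γ) → A) (g : Γ) : (Fin n → Γ) → A :=
  fun v => F (Fin.cons g v)

def xb (ρ : Representation ℤ Γ A) {n : ℕ} (F : (Fin (n + 1) → Γ) → A) (g : Γ) :
    (Fin (n + 1) → Γ) → A :=
  fun v => ρ (v 0) (F (Fin.cons g (fun i => v i.succ))) - F (Fin.cons (g * v 0) (fun i => v i.succ))

lemma contractNth_cons_zero {n : ℕ} (g : Γ) (v : Fin (n + 1) → Γ) :
    Fin.contractNth (0 : Fin (n + 2)) (· * ·) (Fin.cons g v : Fin (n + 2) → Γ)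
      = Fin.cons (g * v 0) (fun i => v i.succ) := by
  funext i
  refine Fin.cases ?_ (fun i => ?_) i
  · rw [Fin.contractNth_apply_of_eq _ _ _ _ (by simp)]; simp
  · rw [Fin.contractNth_apply_of_gt _ _ _ _ (by simp)]; simp

lemma contractNth_cons_succ {n : ℕ} (g : Γ) (v : Fin (n + 1) → Γ) (j : Fin (n + 1)) :
    Fin.contractNth j.succ (· * ·) (Fin.cons g v : Fin (n + 2) → Γ)
      = Fin.cons g (Fin.contractNth j (· * ·) v) := by
  funext i
  refine Fin.cases ?_ (fun i => ?_) i
  · rw [Fin.contractNth_apply_of_lt _ _ _ _ (by simp)]; simp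
  · rcases lt_trichotomy (i : ℕ) j with h | h | h
    · rw [Fin.contractNth_apply_of_lt _ _ _ _ (by simpa using h), Fin.cons_succ,
        Fin.contractNth_apply_of_lt _ _ _ _ h, ← Fin.succ_castSucc, Fin.cons_succ]
    · rw [Fin.contractNth_apply_of_eq _ _ _ _ (by simpa using h), Fin.cons_succ, Fin.cons_succ,
        Fin.contractNth_apply_of_eq _ _ _ _ h, ← Fin.succ_castSucc, Fin.cons_succ]
    · rw [Fin.contractNth_apply_of_gt _ _ _ _ (by simpa using h), Fin.cons_succ,
        Fin.cons_succ, Fin.contractNth_apply_of_gt _ _ _ _ h]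

lemma sl_cd (ρ : Representation ℤ Γ A) {n : ℕ} (F : (Fin (n + 1) → Γ) → A) (g : Γ) :
    sl (cd ρ (n + 1) F) g = (fun v => ρ g (F v)) - cd ρ n (sl F g) + xb ρ F g := by
  funext v
  simp only [sl, cd, xb, Pi.add_apply, Pi.sub_apply]
  rw [Fin.sum_univ_succ]
  simp only [contractNth_cons_zero, contractNth_cons_succ, Fin.cons_zero, Fin.cons_succ,
    Fin.val_succ, pow_succ (-1 : ℤ) (_ + 1), mul_neg, mul_one, neg_smul, Finset.sum_neg_distrib]
  simp
  abel

lemma sl_xb (ρ : Representation ℤ Γ A) {n : ℕ} (F : (Fin (n + 1) → Γ) → A) (g h : Γ) :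
    sl (xb ρ F g) h = (fun v => ρ h (sl F g v)) - sl F (g * h) := by
  funext v
  simp [sl, xb]

/-- Evaluation of cochains on the periodic resolution of the cyclic group generated by `τ`. -/
def Ev (τ : Γ) : (n : ℕ) → ((Fin n → Γ) → A) → A
  | 0, F => F Fin.elim0
  | n + 1, F => if Even n then Ev τ n (sl F τ) else ∑ a ∈ Finset.range 8, Ev τ n (sl F (τ ^ a))

lemma Ev_map (τ : Γ) (f : A →ₗ[ℤ] B) (n : ℕ) (F : (Fin n → Γ) → A) :
    Ev τ n (fun v => f (F v)) = f (Ev τ n F) := by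
  induction n with
  | zero => rfl
  | succ n ih =>
    simp only [Ev]
    split_ifs
    · exact ih _
    · rw [map_sum]; exact Finset.sum_congr rfl fun a _ => ih _

lemma Ev_add (τ : Γ) (n : ℕ) (F G : (Fin n → Γ) → A) :
    Ev τ n (F + G) = Ev τ n F + Ev τ n G := by
  induction n with
  | zero => rfl
  | succ n ih =>
    simp only [Ev]
    split_ifs
    · exact ih _ _
    · rw [← Finset.sum_add_distrib]; exact Finset.sum_congr rfl fun a _ => ih _ _

lemma Ev_neg (τ : Γ) (n : ℕ) (F : (Fin n → Γ) → A) :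
    Ev τ n (-F) = - Ev τ n F :=
  Ev_map τ (-LinearMap.id : A →ₗ[ℤ] A) n F

lemma Ev_sub (τ : Γ) (n : ℕ) (F G : (Fin n → Γ) → A) :
    Ev τ n (F - G) = Ev τ n F - Ev τ n G := by
  rw [sub_eq_add_neg, Ev_add, Ev_neg, sub_eq_add_neg]

/-- differential of the periodic complex -/
def pd (T : A →ₗ[ℤ] A) (n : ℕ) : A →ₗ[ℤ] A :=
  if Even n then T - 1 else ∑ a ∈ Finset.range 8, T ^ a

lemma Ev_cd (ρ : Representation ℤ Γ A) (τ : Γ) (hτ : τ ^ 8 = 1) (n : ℕ) (F : (Fin n → Γ) → A) :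
    Ev τ (n + 1) (cd ρ n F) = pd (ρ τ) n (Ev τ n F) := by
  induction n with
  | zero =>
    simp [Ev, pd, cd, sl]
    rw [sub_eq_add_neg]
    congr 2
    congr 1; congr 1; funext i; exact i.elim0
  | succ n ih =>
    have tele : ∀ f : Γ → A, ∑ a ∈ Finset.range 8, f (τ ^ (a + 1)) = ∑ a ∈ Finset.range 8, f (τ ^ a) := by
      intro f
      rw [Finset.sum_range_succ, hτ, Finset.sum_range_succ' (fun a => f (τ ^ a)), pow_zero]
    rw [Ev]
    by_cases hn : Even n
    · have hn1 : ¬ Even (n + 1) := by simpa [Nat.even_add_one] using hn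
      rw [if_neg hn1]
      simp only [sl_cd, Ev_add, Ev_sub, ih, Ev_map]
      simp only [pd, if_neg hn1, if_pos hn]
      have : ∀ a, Ev τ (n + 1) (xb ρ F (τ ^ a)) =
          ρ τ (Ev τ n (sl F (τ ^ a))) - Ev τ n (sl F (τ ^ (a + 1))) := by
        intro a
        rw [Ev, if_pos hn, sl_xb, Ev_sub, Ev_map, pow_succ]
      simp only [this, LinearMap.sub_apply, Module.End.one_apply, Finset.sum_add_distrib, Finset.sum_sub_distrib]
      rw [tele (fun x => Ev τ n (sl F x))]
      simp
    · have hn1 : Even (n + 1) := by simpa [Nat.even_add_one] using hn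
      rw [if_pos hn1]
      simp only [sl_cd, Ev_add, Ev_sub, ih, Ev_map]
      simp only [pd, if_neg hn, if_pos hn1]
      have : Ev τ (n + 1) (xb ρ F τ) = (∑ a ∈ Finset.range 8, ρ τ ^ a) (Ev τ n (sl F τ)) - Ev τ (n+1) F := by
        rw [Ev, if_neg hn, Ev, if_neg hn]
        simp only [sl_xb, Ev_sub, Ev_map, ← pow_succ', Finset.sum_sub_distrib, tele (fun x => Ev τ n (sl F x))]
        simp
      rw [this]
      simp
end
end CE

end


section

namespace CE
section
variable {Γ E : Type} [Group Γ] [AddCommGroup E]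

lemma pd_comm (bd T : E →ₗ[ℤ] E) (h : ∀ x, bd (T x) = T (bd x)) (n : ℕ) (x : E) :
    bd (pd T n x) = pd T n (bd x) := by
  have hc : Commute bd T := LinearMap.ext h
  have : Commute bd (pd T n) := by
    unfold pd
    split_ifs
    · exact hc.sub_right (Commute.one_right _)
    · exact Commute.sum_right _ _ _ fun a _ => hc.pow_right a
  exact LinearMap.congr_fun this x

lemma pd_pd (T : E →ₗ[ℤ] E) (hT : T ^ 8 = 1) (n : ℕ) (x : E) :
    pd T (n + 1) (pd T n x) = 0 := by
  have h1 : (T - 1) * ∑ a ∈ Finset.range 8, T ^ a = 0 := by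
    rw [mul_geom_sum, hT, sub_self]
  have h2 : (∑ a ∈ Finset.range 8, T ^ a) * (T - 1) = 0 := by
    rw [geom_sum_mul, hT, sub_self]
  unfold pd
  by_cases hn : Even n
  · have hn1 : ¬ Even (n + 1) := by simpa [Nat.even_add_one] using hn
    rw [if_neg hn1, if_pos hn]
    exact LinearMap.congr_fun h2 x
  · have hn1 : Even (n + 1) := by simpa [Nat.even_add_one] using hn
    rw [if_pos hn1, if_neg hn]
    exact LinearMap.congr_fun h1 x

lemma pd_parity (T : E →ₗ[ℤ] E) (m n : ℕ) (hm : Even m) : pd T (m + n) = pd T n := by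
  unfold pd
  simp [Nat.even_add, hm]

theorem block (ρ : Representation ℤ Γ E) (σ χ : Representation ℤ Γ ℤ)
    (bd : E →ₗ[ℤ] E) (hρ : ∀ g x, bd (ρ g x) = ρ g (bd x))
    (hex : ∀ x, bd x = 0 → ∃ y, bd y = x)
    (bot : ℤ →ₗ[ℤ] E) (hbot : ∀ g x, bot (σ g x) = ρ g (bot x)) (hbd : ∀ x, bd (bot x) = 0)
    (top : E →ₗ[ℤ] ℤ) (htop : ∀ g x, top (ρ g x) = χ g (top x)) (htb : ∀ x, top (bd x) = 0)
    (hker : ∀ x, bd x = 0 → top x = 0)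
    (m : ℕ) (hm : Even m) (F : (Fin m → Γ) → ℤ) (hF : cd σ m F = 0) :
    ∃ F' : (Fin (m + 4) → Γ) → ℤ, cd χ (m + 4) F' = 0 ∧ ∀ τ : Γ, τ ^ 8 = 1 →
      ∀ e0 e1 e2 e3 e4 : E, bd e0 = bot (Ev τ m F) → bd e1 = pd (ρ τ) 0 e0 →
        bd e2 = pd (ρ τ) 1 e1 → bd e3 = pd (ρ τ) 0 e2 → bd e4 = pd (ρ τ) 1 e3 →
        ∃ w : ℤ, Ev τ (m + 4) F' = top e4 + (∑ a ∈ Finset.range 8, (χ τ) ^ a) w := by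
  have lift : ∀ {n : ℕ} (G : (Fin n → Γ) → E), (∀ v, bd (G v) = 0) →
      ∃ y : (Fin n → Γ) → E, ∀ v, bd (y v) = G v := fun G hG =>
    ⟨fun v => (hex _ (hG v)).choose, fun v => (hex _ (hG v)).choose_spec⟩
  have next : ∀ {n : ℕ} (y : (Fin n → Γ) → E), (cd ρ n (fun v => bd (y v)) = 0) →
      ∃ z : (Fin (n + 1) → Γ) → E, (∀ v, bd (z v) = cd ρ n y v) ∧
        (cd ρ (n + 1) (fun v => bd (z v)) = 0) := by
    intro n y hy
    obtain ⟨z, hz⟩ := lift (cd ρ n y) (fun v => by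
      rw [cd_map ρ ρ bd hρ] at hy
      exact congrFun hy v)
    refine ⟨z, hz, ?_⟩
    rw [funext hz]
    exact cd_cd ρ n y
  obtain ⟨y0, hy0⟩ := lift (fun v => bot (F v)) (fun v => hbd _)
  obtain ⟨y1, hy1, c1⟩ := next y0 (by
    rw [funext hy0, cd_map σ ρ bot hbot, hF]
    funext v
    simp)
  obtain ⟨y2, hy2, c2⟩ := next y1 c1
  obtain ⟨y3, hy3, c3⟩ := next y2 c2
  obtain ⟨y4, hy4, c4⟩ := next y3 c3
  refine ⟨fun v => top (y4 v), ?_, ?_⟩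
  · rw [cd_map ρ χ top htop]
    funext v
    apply hker
    have := congrFun c4 v
    rwa [cd_map ρ ρ bd hρ] at this
  · intro τ hτ e0 e1 e2 e3 e4 h0 h1 h2 h3 h4
    have hT : (ρ τ) ^ 8 = 1 := by rw [← map_pow, hτ, map_one]
    have key0 : bd (Ev τ m y0) = bot (Ev τ m F) := by
      rw [← Ev_map, ← Ev_map, funext hy0]
    have keys : ∀ {n : ℕ} (y : (Fin n → Γ) → E) (z : (Fin (n + 1) → Γ) → E)
        (_ : ∀ v, bd (z v) = cd ρ n y v) (e e' w : E) (_ : bd e' = pd (ρ τ) n e)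
        (w' : E) (_ : Ev τ n y = e + (bd w + w')) (_ : pd (ρ τ) n w' = 0),
        ∃ w₁, Ev τ (n + 1) z = e' + (bd w₁ + pd (ρ τ) n w) := by
      intro n y z hz e e' w he w' hy hw'
      have : bd (Ev τ (n + 1) z) = pd (ρ τ) n (Ev τ n y) := by
        rw [← Ev_map, funext hz, ← Ev_cd ρ τ hτ]
      obtain ⟨w₁, hw₁⟩ := hex (Ev τ (n + 1) z - e' - pd (ρ τ) n w) (by
        rw [map_sub, map_sub, this, he, hy, pd_comm bd _ (hρ τ), map_add, map_add, hw']
        abel)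
      exact ⟨w₁, by rw [hw₁]; abel⟩
    obtain ⟨w0, hw0⟩ := hex (Ev τ m y0 - e0) (by rw [map_sub, key0, h0, sub_self])
    obtain ⟨w1, hw1⟩ := keys y0 y1 hy1 e0 e1 w0 (by rw [h1, ← pd_parity (ρ τ) m 0 hm]; rfl) 0
      (by rw [hw0]; abel) (map_zero _)
    obtain ⟨w2, hw2⟩ := keys y1 y2 hy2 e1 e2 w1 (by rw [h2, pd_parity (ρ τ) m 1 hm]) _
      hw1 (pd_pd _ hT _ _)
    obtain ⟨w3, hw3⟩ := keys y2 y3 hy3 e2 e3 w2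
      (by rw [h3, ← pd_parity (ρ τ) (m + 2) 0 (by simpa [Nat.even_add] using hm)]) _
      hw2 (pd_pd _ hT _ _)
    obtain ⟨w4, hw4⟩ := keys y3 y4 hy4 e3 e4 w3
      (by rw [h4, ← pd_parity (ρ τ) (m + 2) 1 (by simpa [Nat.even_add] using hm)]) _
      hw3 (pd_pd _ hT _ _)
    refine ⟨top w3, ?_⟩
    rw [Ev_map, hw4, map_add, map_add, htb, zero_add]
    congr 1
    have : pd (ρ τ) (m + 3) = ∑ a ∈ Finset.range 8, (ρ τ) ^ a := by
      unfold pd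
      rw [if_neg]
      simpa [Nat.even_add, hm] using (by decide : ¬ Even 3)
    rw [show m + 2 + 1 = m + 3 from rfl, this, LinearMap.sum_apply, map_sum, LinearMap.sum_apply]
    refine Finset.sum_congr rfl fun a _ => ?_
    rw [← map_pow, ← map_pow, htop]
end
end CE

end


section

namespace CE

def sg : Fin 3 → ℤ := ![1, 1, -1]

def dl : Fin 3 → ℤ := ![-1, 1, 0]

/-- one more coordinate: tensoring with the cellular chains of the interval
(`0` and `1` are the end points, `2` the edge) -/
def bdS {C : Type} [AddCommGroup C] (b : C →ₗ[ℤ] C) : (Fin 3 → C) →ₗ[ℤ] (Fin 3 → C) where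
  toFun x := fun a => sg a • b (x a) + dl a • x 2
  map_add' x y := by
    funext i
    simp; abel
  map_smul' r x := by
    funext i
    simp [smul_comm r]

lemma bdS_apply {C : Type} [AddCommGroup C] (b : C →ₗ[ℤ] C) (x : Fin 3 → C) (a : Fin 3) :
    bdS b x a = sg a • b (x a) + dl a • x 2 := rfl

lemma bdS_apply0 {C : Type} [AddCommGroup C] (b : C →ₗ[ℤ] C) (x : Fin 3 → C) :
    bdS b x 0 = b (x 0) - x 2 := by simp [bdS_apply, sg, dl, sub_eq_add_neg]
lemma bdS_apply1 {C : Type} [AddCommGroup C] (b : C →ₗ[ℤ] C) (x : Fin 3 → C) :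
    bdS b x 1 = b (x 1) + x 2 := by simp [bdS_apply, sg, dl]
lemma bdS_apply2 {C : Type} [AddCommGroup C] (b : C →ₗ[ℤ] C) (x : Fin 3 → C) :
    bdS b x 2 = - b (x 2) := by simp [bdS_apply, sg, dl]

def epS {C : Type} [AddCommGroup C] (e : C →ₗ[ℤ] ℤ) : (Fin 3 → C) →ₗ[ℤ] ℤ where
  toFun x := e (x 0) + e (x 1)
  map_add' x y := by simp; ring
  map_smul' r x := by simp; ring

lemma bdS_ex {C : Type} [AddCommGroup C] (b : C →ₗ[ℤ] C) (e : C →ₗ[ℤ] ℤ)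
    (hb : ∀ x, b x = 0 → e x = 0 → ∃ y, b y = x) (x : Fin 3 → C) (hx : bdS b x = 0)
    (hex : epS e x = 0) : ∃ y, bdS b y = x := by
  have h0 : b (x 0) - x 2 = 0 := by rw [← bdS_apply0, hx]; rfl
  have h1 : b (x 1) + x 2 = 0 := by rw [← bdS_apply1, hx]; rfl
  have h2 : - b (x 2) = 0 := by rw [← bdS_apply2, hx]; rfl
  have h3 : e (x 0) + e (x 1) = 0 := hex
  obtain ⟨z, hz⟩ := hb (x 0 + x 1) (by
    rw [map_add, sub_eq_zero.1 h0, eq_neg_of_add_eq_zero_left h1]; simp) (by rw [map_add, h3])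
  refine ⟨![0, z, - x 0], ?_⟩
  funext i
  refine Fin.cases ?_ (fun i => Fin.cases ?_ (fun i => ?_) i) i
  · rw [bdS_apply0]; simp
  · refine (bdS_apply1 _ _).trans ?_
    simp [hz]
  · rw [Subsingleton.elim i 0]
    refine (bdS_apply2 _ _).trans ?_
    simpa using sub_eq_zero.1 h0

lemma epS_bdS {C : Type} [AddCommGroup C] (b : C →ₗ[ℤ] C) (e : C →ₗ[ℤ] ℤ)
    (hb : ∀ x, e (b x) = 0) (x : Fin 3 → C) :
    epS e (bdS b x) = 0 := by
  simp [epS, bdS_apply0, bdS_apply1, hb]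

abbrev C4 : Type := Fin 3 → Fin 3 → Fin 3 → Fin 3 → ℤ

abbrev EE : Type := C4 × ℤ

def bd4 : C4 →ₗ[ℤ] C4 := bdS (bdS (bdS (bdS 0)))
def ep4 : C4 →ₗ[ℤ] ℤ := epS (epS (epS (epS LinearMap.id)))

def ks (a b c d : Fin 3) : ℤ := if d = 2 then sg a * sg b * sg c else 1

def rot4 : C4 →ₗ[ℤ] C4 where
  toFun x := fun a b c d => ks a b c d * x d a b c
  map_add' x y := by
    funext a b c d
    simp [mul_add]
  map_smul' r x := by
    funext a b c d
    simp; ring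

lemma rot4_apply (x : C4) (a b c d : Fin 3) : rot4 x a b c d = ks a b c d * x d a b c := rfl

lemma bd4_ex (x : C4) (hx : bd4 x = 0) (he : ep4 x = 0) : ∃ y, bd4 y = x :=
  bdS_ex _ _ (bdS_ex _ _ (bdS_ex _ _ (bdS_ex _ _ (fun x _ h => ⟨0, by simpa using h.symm⟩)))) x hx he

lemma ep4_bd4 (x : C4) : ep4 (bd4 x) = 0 :=
  epS_bdS _ _ (epS_bdS _ _ (epS_bdS _ _ (epS_bdS _ _ (fun x => by simp)))) x

lemma bd4_apply (x : C4) (a b c d : Fin 3) : bd4 x a b c d =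
    dl a * x 2 b c d + sg a * dl b * x a 2 c d + sg a * sg b * dl c * x a b 2 d +
      sg a * sg b * sg c * dl d * x a b c 2 := by
  simp only [bd4, bdS_apply, Pi.add_apply, Pi.smul_apply, LinearMap.zero_apply, smul_eq_mul]
  ring

lemma sg_cases (a : Fin 3) : (sg a = 1) ∨ (sg a = -1 ∧ dl a = 0) := by
  revert a; decide

lemma rot4_bd4 (x : C4) : bd4 (rot4 x) = rot4 (bd4 x) := by
  funext a b c d
  rw [rot4_apply, bd4_apply, bd4_apply]
  simp only [rot4_apply]
  have h2 : sg 2 = -1 := rfl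
  have h3 : dl 2 = 0 := rfl
  by_cases hd : d = 2
  · subst hd
    simp only [ks, if_true, h2, h3]
    rcases sg_cases a with ha | ⟨ha, ha'⟩ <;> rcases sg_cases b with hb | ⟨hb, hb'⟩ <;>
      rcases sg_cases c with hc | ⟨hc, hc'⟩ <;> simp only [*] <;> ring
  · have hd' : sg d = 1 := by revert hd; revert d; decide
    simp only [ks, if_neg hd, if_true, hd']
    rcases sg_cases a with ha | ⟨ha, ha'⟩ <;> rcases sg_cases b with hb | ⟨hb, hb'⟩ <;>
      rcases sg_cases c with hc | ⟨hc, hc'⟩ <;> simp only [*] <;> ring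

lemma ep4_rot4 (x : C4) : ep4 (rot4 x) = ep4 x := by
  simp [ep4, epS, rot4_apply, ks]
  abel

def flip : Fin 3 → Fin 3 := ![1, 0, 2]

def fl4 : C4 →ₗ[ℤ] C4 where
  toFun x := fun a b c d => sg a * x (flip a) b c d
  map_add' x y := by
    funext a b c d
    simp [mul_add]
  map_smul' r x := by
    funext a b c d
    simp; ring

lemma fl4_apply (x : C4) (a b c d : Fin 3) : fl4 x a b c d = sg a * x (flip a) b c d := rfl

lemma flip_facts (a : Fin 3) : sg (flip a) = sg a ∧ dl (flip a) = - dl a ∧ flip (flip a) = a ∧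
    sg a * sg a = 1 ∧ sg a * dl a = dl a := by
  revert a; decide

lemma fl4_bd4 (x : C4) : bd4 (fl4 x) = fl4 (bd4 x) := by
  funext a b c d
  obtain ⟨h1, h2, h3, h4, h5⟩ := flip_facts a
  have h6 : flip 2 = 2 := rfl
  have h2' : sg 2 = -1 := rfl
  rw [fl4_apply, bd4_apply, bd4_apply]
  simp only [fl4_apply, h1, h2, h6, h2']
  linear_combination (x 2 b c d) * h5

lemma ep4_fl4 (x : C4) : ep4 (fl4 x) = ep4 x := by
  simp [ep4, epS, fl4_apply, sg, flip]
  abel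

lemma fl4_fl4 (x : C4) : fl4 (fl4 x) = x := by
  funext a b c d
  obtain ⟨h1, h2, h3, h4, h5⟩ := flip_facts a
  simp only [fl4_apply, h1, h3]
  linear_combination (x a b c d) * h4

lemma ks4 (a b c d : Fin 3) : ks a b c d * ks d a b c * ks c d a b * ks b c d a = 1 := by
  revert a b c d; decide

lemma rot4_4 (x : C4) : rot4 (rot4 (rot4 (rot4 x))) = x := by
  funext a b c d
  simp only [rot4_apply]
  linear_combination (x a b c d) * ks4 a b c d

lemma ks_flip (a b c d : Fin 3) : ks (flip a) b c d = ks a b c d ∧ ks a (flip b) c d = ks a b c d ∧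
    ks a b (flip c) d = ks a b c d ∧ ks a b c (flip d) = ks a b c d := by
  revert a b c d; decide

/-- the flips of the four coordinates, in the order in which `rot4` permutes them -/
def flp : Fin 4 → C4 →ₗ[ℤ] C4 :=
  ![fl4,
    { toFun := fun x a b c d => sg d * x a b c (flip d)
      map_add' := fun x y => by funext a b c d; simp [mul_add]
      map_smul' := fun r x => by funext a b c d; simp; ring },
    { toFun := fun x a b c d => sg c * x a b (flip c) d
      map_add' := fun x y => by funext a b c d; simp [mul_add]
      map_smul' := fun r x => by funext a b c d; simp; ring },
    { toFun := fun x a b c d => sg b * x a (flip b) c d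
      map_add' := fun x y => by funext a b c d; simp [mul_add]
      map_smul' := fun r x => by funext a b c d; simp; ring }]

lemma flp0 (x : C4) (a b c d : Fin 3) : flp 0 x a b c d = sg a * x (flip a) b c d := rfl
lemma flp1 (x : C4) (a b c d : Fin 3) : flp 1 x a b c d = sg d * x a b c (flip d) := rfl
lemma flp2 (x : C4) (a b c d : Fin 3) : flp 2 x a b c d = sg c * x a b (flip c) d := rfl
lemma flp3 (x : C4) (a b c d : Fin 3) : flp 3 x a b c d = sg b * x a (flip b) c d := rfl

lemma rot_flp0 (x : C4) : rot4 (flp 0 x) = flp 1 (rot4 x) := by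
  funext a b c d
  obtain ⟨h1, h2, h3, h4⟩ := ks_flip a b c d
  simp only [rot4_apply, flp0, flp1, h1, h2, h3, h4]; ring
lemma rot_flp1 (x : C4) : rot4 (flp 1 x) = flp 2 (rot4 x) := by
  funext a b c d
  obtain ⟨h1, h2, h3, h4⟩ := ks_flip a b c d
  simp only [rot4_apply, flp1, flp2, h1, h2, h3, h4]; ring
lemma rot_flp2 (x : C4) : rot4 (flp 2 x) = flp 3 (rot4 x) := by
  funext a b c d
  obtain ⟨h1, h2, h3, h4⟩ := ks_flip a b c d
  simp only [rot4_apply, flp3, flp2, h1, h2, h3, h4]; ring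
lemma rot_flp3 (x : C4) : rot4 (flp 3 x) = flp 0 (rot4 x) := by
  funext a b c d
  obtain ⟨h1, h2, h3, h4⟩ := ks_flip a b c d
  simp only [rot4_apply, flp3, flp0, h1, h2, h3, h4]; ring

lemma flp_comm (i j : Fin 4) (x : C4) : flp i (flp j x) = flp j (flp i x) := by
  funext a b c d
  fin_cases i <;> fin_cases j <;> simp [flp0, flp1, flp2, flp3] <;> ring

/-- a unit commuting with everything in sight, together with its determinant -/
def VV (E : Type) [AddCommGroup E] (bd : E →ₗ[ℤ] E) (top : E →ₗ[ℤ] ℤ) (b : E) :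
    Subgroup ((Module.End ℤ E)ˣ × ℤˣ) where
  carrier := {u | (∀ x, bd (u.1.1 x) = u.1.1 (bd x)) ∧ (∀ x, top (u.1.1 x) = u.2.1 * top x) ∧
    u.1.1 b = b}
  mul_mem' := by
    rintro u v ⟨h1, h2, h3⟩ ⟨k1, k2, k3⟩
    refine ⟨fun x => ?_, fun x => ?_, ?_⟩
    · simp [h1, k1]
    · simp [h2, k2, mul_assoc]
    · simp [h3, k3]
  one_mem' := by simp
  inv_mem' := by
    rintro u ⟨h1, h2, h3⟩
    have hu : ∀ x, u.1.1 (u.1⁻¹.1 x) = x := fun x => LinearMap.congr_fun u.1.mul_inv x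
    have hu' : ∀ x, u.1⁻¹.1 (u.1.1 x) = x := fun x => LinearMap.congr_fun u.1.inv_mul x
    refine ⟨fun x => ?_, fun x => ?_, ?_⟩
    · show bd (u.1⁻¹.1 x) = u.1⁻¹.1 (bd x)
      rw [← hu' (bd (u.1⁻¹.1 x)), ← h1, hu]
    · show top (u.1⁻¹.1 x) = u.2⁻¹.1 * top x
      rw [← hu x, h2, hu', ← mul_assoc, Units.inv_mul, one_mul]
    · show u.1⁻¹.1 b = b
      nth_rw 1 [← h3]
      exact hu' b

def bdE : EE →ₗ[ℤ] EE := (bd4.comp (LinearMap.fst ℤ C4 ℤ)).prod (ep4.comp (LinearMap.fst ℤ C4 ℤ))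
def topE : EE →ₗ[ℤ] ℤ where
  toFun x := x.1 2 2 2 2
  map_add' x y := rfl
  map_smul' r x := rfl
def botE : EE := (0, 1)

def extE (f : C4 →ₗ[ℤ] C4) : Module.End ℤ EE := LinearMap.prodMap f LinearMap.id

lemma extE_apply (f : C4 →ₗ[ℤ] C4) (x : EE) : extE f x = (f x.1, x.2) := rfl

lemma bdE_apply (x : EE) : bdE x = (bd4 x.1, ep4 x.1) := rfl

lemma bdE_ex (x : EE) (hx : bdE x = 0) : ∃ y, bdE y = x := by
  rw [bdE_apply, Prod.mk_eq_zero] at hx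
  obtain ⟨y, hy⟩ := bd4_ex x.1 hx.1 hx.2
  let v : C4 := fun a b c d => if a = 1 ∧ b = 1 ∧ c = 1 ∧ d = 1 then 1 else 0
  have hv : bd4 v = 0 := by decide +kernel
  have hv' : ep4 v = 1 := by decide +kernel
  refine ⟨(y + (x.2 - ep4 y) • v, 0), ?_⟩
  rw [bdE_apply]
  have e1 : bd4 (y + (x.2 - ep4 y) • v) = x.1 := by
    rw [map_add, map_smul, hv, hy, smul_zero, add_zero]
  have e2 : ep4 (y + (x.2 - ep4 y) • v) = x.2 := by
    rw [map_add, map_smul, hv', smul_eq_mul]; ring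
  exact Prod.ext e1 e2

lemma topE_bdE (x : EE) : topE (bdE x) = 0 := by
  show bd4 x.1 2 2 2 2 = 0
  rw [bd4_apply]
  simp [dl]

abbrev VE := VV EE bdE topE botE

lemma extE_mul (f g : C4 →ₗ[ℤ] C4) : extE f * extE g = extE (f.comp g) := rfl

lemma extE_one (f : C4 →ₗ[ℤ] C4) (h : ∀ x, f x = x) : extE f = 1 := by
  apply LinearMap.ext
  intro x
  rw [extE_apply, h]; rfl

def fl0V : VE := ⟨(⟨extE (flp 0), extE (flp 0), (extE_mul _ _).trans (extE_one _ fl4_fl4), (extE_mul _ _).trans (extE_one _ fl4_fl4)⟩, -1),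
  fun x => by
    simp only [bdE_apply, extE_apply]
    exact Prod.ext (fl4_bd4 _) (ep4_fl4 _),
  fun x => by show fl4 x.1 2 2 2 2 = _; simp [fl4_apply, sg, flip]; rfl,
  by show extE _ _ = _; rw [extE_apply]; simp [botE]⟩

def rotV : VE := ⟨(⟨extE rot4, extE (rot4 ∘ₗ rot4 ∘ₗ rot4), (extE_mul _ _).trans (extE_one _ rot4_4), (extE_mul _ _).trans (extE_one _ rot4_4)⟩, -1),
  fun x => by
    simp only [bdE_apply, extE_apply]
    exact Prod.ext (rot4_bd4 _) (ep4_rot4 _),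
  fun x => by show rot4 x.1 2 2 2 2 = _; simp [rot4_apply, ks, sg]; rfl,
  by show extE _ _ = _; rw [extE_apply]; simp [botE]⟩

end CE

end


section

namespace CE
section
variable {U : Type} [Group U]

lemma z2_zpow {d : U} (h : d * d = 1) (m n : ℤ) (hmn : (m - n) % 2 = 0) : d ^ m = d ^ n := by
  obtain ⟨k, hk⟩ := Int.dvd_of_emod_eq_zero hmn
  have : m = n + 2 * k := by omega
  rw [this, _root_.zpow_add, _root_.zpow_mul]
  have : d ^ (2 : ℤ) = 1 := by rw [zpow_two, h]
  rw [this, _root_.one_zpow, mul_one]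

/-- the homomorphism on the lattice -/
def latHom (d0 d1 d2 d3 : U) (h01 : Commute d0 d1) (h02 : Commute d0 d2) (h03 : Commute d0 d3)
    (h12 : Commute d1 d2) (h13 : Commute d1 d3) (h23 : Commute d2 d3) : Crystal.Lat 5 →* U :=
  MonoidHom.mk' (fun l => d0 ^ (l.toAdd 0 + l.toAdd 4) * (d1 ^ (l.toAdd 1) *
    (d2 ^ (l.toAdd 2) * d3 ^ (l.toAdd 3)))) (by
    intro l m
    have e : ∀ i, (l * m).toAdd i = l.toAdd i + m.toAdd i := fun i => rfl
    simp only [e]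
    rw [show l.toAdd 0 + m.toAdd 0 + (l.toAdd 4 + m.toAdd 4) = (l.toAdd 0 + l.toAdd 4) +
      (m.toAdd 0 + m.toAdd 4) by ring]
    generalize l.toAdd 0 + l.toAdd 4 = a0
    generalize m.toAdd 0 + m.toAdd 4 = b0
    simp only [_root_.zpow_add]
    rw [((h23.zpow_zpow (m.toAdd 2) (l.toAdd 3))).mul_mul_mul_comm,
      (((h12.zpow_zpow (m.toAdd 1) (l.toAdd 2))).mul_right
        ((h13.zpow_zpow (m.toAdd 1) (l.toAdd 3)))).mul_mul_mul_comm,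
      (((h01.zpow_zpow b0 (l.toAdd 1))).mul_right (((h02.zpow_zpow b0 (l.toAdd 2))).mul_right
        ((h03.zpow_zpow b0 (l.toAdd 3))))).mul_mul_mul_comm])

abbrev Gam : Type := Crystal.Crys 8 holM holM_pow

abbrev ZG : Type := Multiplicative (ZMod 8)

def tgen : ZG := Multiplicative.ofAdd 1

def act : ZG →* MulAut (Crystal.Lat 5) := Crystal.matAction 8 holM holM_pow

lemma act_tgen (l : Crystal.Lat 5) :
    act tgen l = Multiplicative.ofAdd (holM.mulVec l.toAdd) := by
  rfl

lemma zg_pow (g : ZG) : g = tgen ^ (g.toAdd.val) := by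
  revert g; decide

theorem exists_hom (d0 d1 d2 d3 T : U) (h01 : Commute d0 d1) (h02 : Commute d0 d2)
    (h03 : Commute d0 d3)
    (h12 : Commute d1 d2) (h13 : Commute d1 d3) (h23 : Commute d2 d3) (h0 : d0 * d0 = 1)
    (t0 : T * d0 = d1 * T) (t1 : T * d1 = d2 * T) (t2 : T * d2 = d3 * T) (t3 : T * d3 = d0 * T)
    (hT : T ^ 8 = 1) :
    ∃ Φ : Gam →* U, Φ (SemidirectProduct.inr tgen) = T ∧
      Φ (SemidirectProduct.inl (Multiplicative.ofAdd (Pi.single 0 1))) = d0 := by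
  let f₁ := latHom d0 d1 d2 d3 h01 h02 h03 h12 h13 h23
  let f₂ : ZG →* U := Crystal.zmodHom 8 T hT
  have c0 : T * d0 * T⁻¹ = d1 := by rw [t0]; group
  have c1 : T * d1 * T⁻¹ = d2 := by rw [t1]; group
  have c2 : T * d2 * T⁻¹ = d3 := by rw [t2]; group
  have c3 : T * d3 * T⁻¹ = d0 := by rw [t3]; group
  have h1 : d1 * d1 = 1 := by
    rw [← c0]
    calc T * d0 * T⁻¹ * (T * d0 * T⁻¹) = T * (d0 * d0) * T⁻¹ := by group
      _ = 1 := by rw [h0]; group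
  have hc : MulAut.conj T d0 = d1 ∧ MulAut.conj T d1 = d2 ∧ MulAut.conj T d2 = d3 ∧
    MulAut.conj T d3 = d0 := ⟨c0, c1, c2, c3⟩
  have hgen : ∀ l, f₁ (act tgen l) = MulAut.conj T (f₁ l) := by
    intro l
    rw [act_tgen]
    show d0 ^ ((holM.mulVec l.toAdd) 0 + (holM.mulVec l.toAdd) 4) *
      (d1 ^ ((holM.mulVec l.toAdd) 1) *
      (d2 ^ ((holM.mulVec l.toAdd) 2) * d3 ^ ((holM.mulVec l.toAdd) 3))) =
      MulAut.conj T (d0 ^ (l.toAdd 0 + l.toAdd 4) * (d1 ^ (l.toAdd 1) *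
        (d2 ^ (l.toAdd 2) * d3 ^ (l.toAdd 3))))
    simp only [map_mul, map_zpow, hc]
    have m0 : (holM.mulVec l.toAdd) 0 = - l.toAdd 4 := by
      simp [holM, Matrix.mulVec, dotProduct, Fin.sum_univ_succ]
    have m1 : (holM.mulVec l.toAdd) 1 = l.toAdd 0 - l.toAdd 4 := by
      simp [holM, Matrix.mulVec, dotProduct, Fin.sum_univ_succ]; rfl
    have m2 : (holM.mulVec l.toAdd) 2 = l.toAdd 1 := by
      simp [holM, Matrix.mulVec, dotProduct, Fin.sum_univ_succ]
    have m3 : (holM.mulVec l.toAdd) 3 = l.toAdd 2 := by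
      simp [holM, Matrix.mulVec, dotProduct, Fin.sum_univ_succ]
    have m4 : (holM.mulVec l.toAdd) 4 = l.toAdd 3 - l.toAdd 4 := by
      simp [holM, Matrix.mulVec, dotProduct, Fin.sum_univ_succ]; rfl
    rw [m0, m1, m2, m3, m4]
    rw [z2_zpow h0 _ (l.toAdd 3) (by omega), z2_zpow h1 _ (l.toAdd 0 + l.toAdd 4) (by omega)]
    rw [((h01.zpow_zpow _ _).mul_right ((h02.zpow_zpow _ _).mul_right (h03.zpow_zpow _ _))).eq]
    simp only [mul_assoc]
  have hpow : ∀ (n : ℕ) l, f₁ (act (tgen ^ n) l) = MulAut.conj (T ^ n) (f₁ l) := by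
    intro n
    induction n with
    | zero => intro l; simp
    | succ n ih =>
      intro l
      rw [pow_succ', pow_succ', map_mul, map_mul, MulAut.mul_apply, MulAut.mul_apply, hgen, ih]
  refine ⟨SemidirectProduct.lift f₁ f₂ ?_, ?_, ?_⟩
  · intro g
    apply MonoidHom.ext
    intro l
    have := hpow g.toAdd.val l
    rw [← zg_pow] at this
    exact this
  · rw [SemidirectProduct.lift_inr]
    show T ^ ((1 : ZMod 8).val) = T
    exact pow_one T
  · rw [SemidirectProduct.lift_inl]
    show d0 ^ ((Pi.single 0 1 : Fin 5 → ℤ) 0 + (Pi.single 0 1 : Fin 5 → ℤ) 4) * (d1 ^ ((Pi.single 0 1 : Fin 5 → ℤ) 1) *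
        (d2 ^ ((Pi.single 0 1 : Fin 5 → ℤ) 2) * d3 ^ ((Pi.single 0 1 : Fin 5 → ℤ) 3))) = d0
    simp

end

def tau0 : Gam := SemidirectProduct.inr tgen
def tau1 : Gam := SemidirectProduct.inl (Multiplicative.ofAdd (Pi.single 0 1)) * SemidirectProduct.inr tgen

lemma tau0_pow : tau0 ^ 8 = 1 := by
  rw [tau0, ← map_pow]
  have : tgen ^ 8 = 1 := by decide
  rw [this, map_one]

lemma sdp_pow (l : Crystal.Lat 5) (n : ℕ) :
    ((SemidirectProduct.inl l * SemidirectProduct.inr tgen : Gam)) ^ n =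
      SemidirectProduct.inl (∏ k ∈ Finset.range n, act (tgen ^ k) l) * SemidirectProduct.inr (tgen ^ n) := by
  induction n with
  | zero => simp
  | succ n ih =>
    rw [pow_succ, ih, Finset.prod_range_succ]
    apply SemidirectProduct.ext
    · simp only [SemidirectProduct.mul_left, SemidirectProduct.mul_right,
        SemidirectProduct.left_inl, SemidirectProduct.left_inr, SemidirectProduct.right_inl,
        SemidirectProduct.right_inr, map_one, mul_one, one_mul]
      rfl
    · simp [pow_succ]

lemma tau1_pow : tau1 ^ 8 = 1 := by
  rw [tau1, sdp_pow]
  have : tgen ^ 8 = 1 := by decide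
  rw [this, map_one, mul_one]
  have : ∏ k ∈ Finset.range 8, act (tgen ^ k) (Multiplicative.ofAdd (Pi.single 0 1)) = 1 := by
    have h : ∀ k l, act (tgen ^ (k + 1)) l = Multiplicative.ofAdd (holM.mulVec (act (tgen ^ k) l).toAdd) := by
      intro k l
      rw [pow_succ', map_mul, MulAut.mul_apply, act_tgen]
    simp only [Finset.prod_range_succ, h, Finset.prod_range_zero, pow_zero, map_one, MulAut.one_apply]
    decide +kernel
  rw [this, map_one]

end CE

end


section

namespace CE

def cell (p q r s : Fin 3) : C4 := fun a b c d => if a = p ∧ b = q ∧ c = r ∧ d = s then 1 else 0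

def ch0 : EE := (cell 1 1 1 1, 0)
def ch1 : EE := (- cell 2 1 1 1, 0)
def ch2 : EE := (cell 2 1 1 2 + cell 2 1 2 0 + cell 2 2 0 0 - cell 1 2 0 2 - cell 1 2 2 1 -
  cell 1 1 2 2, 0)
def ch3 : EE := (cell 2 1 2 2 + cell 2 2 0 2 + cell 2 2 2 1, 0)
def ch4 : EE := (- 3 • cell 2 2 2 2, 0)

def Tm : Module.End ℤ EE := extE (flp 0) * extE rot4

lemma pd0 {E : Type} [AddCommGroup E] (T : Module.End ℤ E) (x : E) : pd T 0 x = T x - x := rfl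

lemma pd1 {E : Type} [AddCommGroup E] (T : Module.End ℤ E) (x : E) :
    pd T 1 x = x + T x + T (T x) + T (T (T x)) + T (T (T (T x))) + T (T (T (T (T x)))) +
      T (T (T (T (T (T x))))) + T (T (T (T (T (T (T x)))))) := by
  have : pd T 1 = ∑ a ∈ Finset.range 8, T ^ a := rfl
  rw [this, LinearMap.sum_apply]
  simp only [Finset.sum_range_succ, Finset.sum_range_zero, pow_succ, pow_zero, one_mul, zero_add,
    Module.End.mul_apply, Module.End.one_apply]

lemma chain0 : bdE ch0 = botE := by decide +kernel
lemma chain1 : bdE ch1 = pd Tm 0 ch0 := by rw [pd0]; decide +kernel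
lemma chain2 : bdE ch2 = pd Tm 1 ch1 := by rw [pd1]; decide +kernel
lemma chain3 : bdE ch3 = pd Tm 0 ch2 := by rw [pd0]; decide +kernel
lemma chain4 : bdE ch4 = pd Tm 1 ch3 := by rw [pd1]; decide +kernel
lemma chain_top : topE ch4 = -3 := by decide +kernel
lemma chainP : pd (extE rot4) 0 ch0 = 0 := by rw [pd0]; decide +kernel

section
variable {Γ : Type} [Group Γ]

def rep1 (Φ : Γ →* VE) : Representation ℤ Γ EE :=
  (Units.coeHom _).comp ((MonoidHom.fst _ _).comp ((Subgroup.subtype _).comp Φ))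

def chi (Φ : Γ →* VE) : Γ →* ℤˣ := (MonoidHom.snd _ _).comp ((Subgroup.subtype _).comp Φ)

def twist (χ : Γ →* ℤˣ) {E : Type} [AddCommGroup E] (ρ : Representation ℤ Γ E) :
    Representation ℤ Γ E where
  toFun g := (χ g : ℤ) • ρ g
  map_one' := by simp
  map_mul' g h := by
    apply LinearMap.ext
    intro x
    rw [map_mul, map_mul, Units.val_mul]
    show ((χ g : ℤ) * (χ h : ℤ)) • (ρ g (ρ h x)) = (χ g : ℤ) • ρ g ((χ h : ℤ) • ρ h x)
    rw [map_smul, mul_smul]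

lemma twist_apply (χ : Γ →* ℤˣ) {E : Type} [AddCommGroup E] (ρ : Representation ℤ Γ E) (g : Γ)
    (x : E) : twist χ ρ g x = (χ g : ℤ) • ρ g x := rfl

def bot : ℤ →ₗ[ℤ] EE := LinearMap.toSpanSingleton ℤ EE botE

lemma bot_apply (n : ℤ) : bot n = n • botE := rfl

lemma bdE_botE : bdE botE = 0 := by decide +kernel

theorem exists_cocycle (Φ : Γ →* VE) :
    ∃ F : (Fin 8 → Γ) → ℤ, cd (1 : Representation ℤ Γ ℤ) 8 F = 0 ∧ ∀ τ, τ ^ 8 = 1 →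
      ((Φ τ = rotV → (8 : ℤ) ∣ Ev τ 8 F) ∧ (Φ τ = fl0V * rotV → Odd (Ev τ 8 F))) := by
  have hΦ := fun g => (Φ g).2
  have p1 : ∀ g x, bdE (rep1 Φ g x) = rep1 Φ g (bdE x) := fun g => (hΦ g).1
  have p2 : ∀ g x, topE (rep1 Φ g x) = (chi Φ g : ℤ) * topE x := fun g => (hΦ g).2.1
  have p3 : ∀ g, rep1 Φ g botE = botE := fun g => (hΦ g).2.2
  have hb : ∀ n, bdE (bot n) = 0 := fun n => by rw [bot_apply, map_smul, bdE_botE, smul_zero]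
  have hk : ∀ x, bdE x = 0 → topE x = 0 := by
    intro x hx
    obtain ⟨y, rfl⟩ := bdE_ex x hx
    exact topE_bdE y
  obtain ⟨F1, hF1, h1⟩ := block (rep1 Φ) (1 : Representation ℤ Γ ℤ) (twist (chi Φ) 1) bdE p1 bdE_ex bot
    (fun g x => by rw [bot_apply, bot_apply, map_smul, p3]; rfl) hb topE
    (fun g x => by rw [p2]; rfl) topE_bdE hk 0 (by decide) (fun _ => 1) (by
      funext v; simp [cd])
  obtain ⟨F2, hF2, h2⟩ := block (twist (chi Φ) (rep1 Φ)) (twist (chi Φ) 1) (1 : Representation ℤ Γ ℤ)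
    bdE (fun g x => by rw [twist_apply, twist_apply, map_smul, p1]) bdE_ex bot
    (fun g x => by
      rw [twist_apply, twist_apply, map_smul, bot_apply, bot_apply, map_smul, p3]
      rfl) hb topE
    (fun g x => by
      rw [twist_apply, map_smul, p2, smul_eq_mul, ← mul_assoc, ← Units.val_mul, Int.units_mul_self]
      simp) topE_bdE hk 4 (by decide) F1 hF1
  refine ⟨F2, hF2, fun τ hτ => ⟨fun hT => ?_, fun hT => ?_⟩⟩
  · have r1 : rep1 Φ τ = extE rot4 := by
      show (Φ τ).1.1.1 = _
      rw [hT]; rfl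
    have r2 : chi Φ τ = -1 := by
      show (Φ τ).1.2 = _
      rw [hT]; rfl
    obtain ⟨w, hw⟩ := h1 τ hτ ch0 0 0 0 0 (by rw [chain0]; exact (one_smul _ _).symm)
      (by rw [r1, chainP, map_zero]) (by simp) (by simp) (by simp)
    have e1 : Ev τ 4 F1 = 0 := by
      rw [hw]
      have : (twist (chi Φ) 1 τ : ℤ →ₗ[ℤ] ℤ) = -1 := by
        apply LinearMap.ext; intro x; rw [twist_apply, r2]; simp
      rw [this]
      have e2 : ∑ a ∈ Finset.range 8, (-1 : ℤ →ₗ[ℤ] ℤ) ^ a = 0 := by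
        have h2 : (-1 : ℤ →ₗ[ℤ] ℤ) * (-1) = 1 := by simp
        simp only [Finset.sum_range_succ, Finset.sum_range_zero, pow_succ, pow_zero, one_mul, h2]
        abel
      rw [e2]
      simp
    obtain ⟨w', hw'⟩ := h2 τ hτ 0 0 0 0 0 (by rw [e1]; simp) (by simp) (by simp) (by simp) (by simp)
    rw [hw']
    refine ⟨w', ?_⟩
    simp
  · have r1 : rep1 Φ τ = Tm := by
      show (Φ τ).1.1.1 = _
      rw [hT]; rfl
    have r2 : chi Φ τ = 1 := by
      show (Φ τ).1.2 = _
      rw [hT]; decide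
    obtain ⟨w, hw⟩ := h1 τ hτ ch0 ch1 ch2 ch3 ch4 (by rw [chain0]; exact (one_smul _ _).symm)
      (by rw [r1, chain1]) (by rw [r1, chain2]) (by rw [r1, chain3]) (by rw [r1, chain4])
    have t1 : (twist (chi Φ) 1 τ : ℤ →ₗ[ℤ] ℤ) = 1 := by
      apply LinearMap.ext; intro x; rw [twist_apply, r2]; simp
    have t2 : twist (chi Φ) (rep1 Φ) τ = Tm := by
      apply LinearMap.ext; intro x; rw [twist_apply, r2, r1]; simp
    obtain ⟨w', hw'⟩ := h2 τ hτ (Ev τ 4 F1 • ch0) (Ev τ 4 F1 • ch1) (Ev τ 4 F1 • ch2)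
      (Ev τ 4 F1 • ch3) (Ev τ 4 F1 • ch4) (by rw [map_smul, chain0]; rfl)
      (by rw [t2, map_smul, map_smul, chain1]) (by rw [t2, map_smul, map_smul, chain2])
      (by rw [t2, map_smul, map_smul, chain3]) (by rw [t2, map_smul, map_smul, chain4])
    rw [t1, chain_top] at hw
    have o1 : Ev τ 4 F1 = -3 + 8 * w := by
      rw [show Ev τ 4 F1 = _ from hw]; simp
    have o2 : Ev τ 8 F2 = Ev τ 4 F1 * (-3) + 8 * w' := by
      rw [show Ev τ 8 F2 = _ from hw', map_smul, chain_top]; simp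
    rw [o2, o1]
    exact ⟨4 - 12 * w + 4 * w', by ring⟩
end

/-- evaluation kills coboundaries modulo 8 -/
lemma Ev_cobound {Γ : Type} [Group Γ] (τ : Γ) (hτ : τ ^ 8 = 1) (F : (Fin 7 → Γ) → ℤ) :
    (8 : ℤ) ∣ Ev τ 8 (cd (1 : Representation ℤ Γ ℤ) 7 F) := by
  rw [Ev_cd _ τ hτ]
  refine ⟨Ev τ 7 F, ?_⟩
  have : pd ((1 : Representation ℤ Γ ℤ) τ) 7 = ∑ a ∈ Finset.range 8, (1 : ℤ →ₗ[ℤ] ℤ) ^ a := rfl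
  rw [this]
  simp

lemma VE_ext (u v : VE) (h : ∀ x, u.1.1.1 x = v.1.1.1 x) (h' : u.1.2 = v.1.2) : u = v :=
  Subtype.ext (Prod.ext (Units.ext (LinearMap.ext h)) h')

lemma rotV_4 : rotV ^ 4 = 1 := by
  refine VE_ext _ _ (fun x => Prod.ext ?_ rfl) rfl
  exact rot4_4 x.1

lemma fl0V_2 : fl0V * fl0V = 1 := by
  refine VE_ext _ _ (fun x => Prod.ext ?_ rfl) rfl
  exact fl4_fl4 x.1

def dV1 : VE := rotV * fl0V * rotV⁻¹
def dV2 : VE := rotV * dV1 * rotV⁻¹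
def dV3 : VE := rotV * dV2 * rotV⁻¹

lemma dV_apply (x : C4) (n : ℤ) : fl0V.1.1.1 (x, n) = (flp 0 x, n) ∧ dV1.1.1.1 (x, n) = (flp 1 x, n) ∧
    dV2.1.1.1 (x, n) = (flp 2 x, n) ∧ dV3.1.1.1 (x, n) = (flp 3 x, n) := by
  have e : ∀ u : VE, ∀ x, (rotV * u * rotV⁻¹).1.1.1 x = rotV.1.1.1 (u.1.1.1 (rotV.1.1⁻¹.1 x)) := fun u x => rfl
  have e2 : ∀ x n, rotV.1.1⁻¹.1 (x, n) = (rot4 (rot4 (rot4 x)), n) := fun x n => rfl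
  have e3 : ∀ x n, rotV.1.1.1 (x, n) = (rot4 x, n) := fun x n => rfl
  have k0 : ∀ x n, fl0V.1.1.1 (x, n) = (flp 0 x, n) := fun x n => rfl
  have k1 : ∀ x n, dV1.1.1.1 (x, n) = (flp 1 x, n) := fun x n => by
    rw [dV1, e, e2, k0, e3, rot_flp0, rot4_4]
  have k2 : ∀ x n, dV2.1.1.1 (x, n) = (flp 2 x, n) := fun x n => by
    rw [dV2, e, e2, k1, e3, rot_flp1, rot4_4]
  have k3 : ∀ x n, dV3.1.1.1 (x, n) = (flp 3 x, n) := fun x n => by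
    rw [dV3, e, e2, k2, e3, rot_flp2, rot4_4]
  exact ⟨k0 x n, k1 x n, k2 x n, k3 x n⟩

lemma comm_aux (u v : VE) (i j : Fin 4) (hu : ∀ x n, u.1.1.1 (x, n) = (flp i x, n))
    (hv : ∀ x n, v.1.1.1 (x, n) = (flp j x, n)) : Commute u v := by
  refine VE_ext _ _ (fun x => ?_) (mul_comm _ _)
  show u.1.1.1 (v.1.1.1 (x.1, x.2)) = v.1.1.1 (u.1.1.1 (x.1, x.2))
  rw [hu, hv, hu, hv, flp_comm]

lemma VE_hom (T : VE) (hT : T = rotV ∨ T = fl0V * rotV) :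
    ∃ Φ : Gam →* VE, Φ tau0 = T ∧ Φ tau1 = fl0V * T := by
  have k0 := fun x n => (dV_apply x n).1
  have k1 := fun x n => (dV_apply x n).2.1
  have k2 := fun x n => (dV_apply x n).2.2.1
  have k3 := fun x n => (dV_apply x n).2.2.2
  have h01 := comm_aux _ _ _ _ k0 k1
  have h02 := comm_aux _ _ _ _ k0 k2
  have h03 := comm_aux _ _ _ _ k0 k3
  have h12 := comm_aux _ _ _ _ k1 k2
  have h13 := comm_aux _ _ _ _ k1 k3
  have h23 := comm_aux _ _ _ _ k2 k3
  have t0 : rotV * fl0V = dV1 * rotV := by rw [dV1]; group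
  have t1 : rotV * dV1 = dV2 * rotV := by rw [dV2]; group
  have t2 : rotV * dV2 = dV3 * rotV := by rw [dV3]; group
  have t3 : rotV * dV3 = fl0V * rotV := by
    refine VE_ext _ _ (fun x => ?_) (by rw [dV3, dV2, dV1]; decide)
    show rotV.1.1.1 (dV3.1.1.1 (x.1, x.2)) = fl0V.1.1.1 (rotV.1.1.1 (x.1, x.2))
    rw [k3]
    exact Prod.ext (rot_flp3 x.1) rfl
  have h8 : rotV ^ 8 = 1 := by rw [show 8 = 4 * 2 from rfl, pow_mul, rotV_4, one_pow]
  have fin : ∀ T : VE, T ^ 8 = 1 → T * fl0V = dV1 * T → T * dV1 = dV2 * T → T * dV2 = dV3 * T →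
      T * dV3 = fl0V * T → ∃ Φ : Gam →* VE, Φ tau0 = T ∧ Φ tau1 = fl0V * T := by
    intro T hT t0 t1 t2 t3
    obtain ⟨Φ, ha, hb⟩ := exists_hom fl0V dV1 dV2 dV3 T h01 h02 h03 h12 h13 h23 fl0V_2 t0 t1 t2 t3 hT
    exact ⟨Φ, ha, by rw [tau1, map_mul, ha, hb]⟩
  rcases hT with rfl | rfl
  · exact fin _ h8 t0 t1 t2 t3
  · refine fin _ ?_ ?_ ?_ ?_ ?_
    · -- eighth power
      have s2 : (fl0V * rotV) ^ 2 = fl0V * dV1 * rotV ^ 2 := by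
        rw [pow_two, pow_two]
        calc fl0V * rotV * (fl0V * rotV) = fl0V * (rotV * fl0V) * rotV := by group
          _ = _ := by rw [t0]; group
      have s2' : rotV ^ 2 * (fl0V * dV1) = dV2 * dV3 * rotV ^ 2 := by
        calc rotV ^ 2 * (fl0V * dV1) = rotV * (rotV * fl0V) * dV1 := by simp only [pow_two, mul_assoc]
          _ = rotV * dV1 * (rotV * dV1) := by rw [t0]; group
          _ = dV2 * (rotV * dV2) * rotV := by rw [t1]; group
          _ = _ := by rw [t2]; simp only [pow_two, mul_assoc]
      have s4 : (fl0V * rotV) ^ 4 = fl0V * dV1 * (dV2 * dV3) := by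
        rw [show 4 = 2 * 2 from rfl, pow_mul, s2, pow_two (fl0V * dV1 * rotV ^ 2)]
        calc fl0V * dV1 * rotV ^ 2 * (fl0V * dV1 * rotV ^ 2) =
            fl0V * dV1 * (rotV ^ 2 * (fl0V * dV1)) * rotV ^ 2 := by group
          _ = fl0V * dV1 * (dV2 * dV3) * rotV ^ 4 := by rw [s2']; group
          _ = _ := by rw [rotV_4, mul_one]
      have q1 : dV1 * dV1 = 1 := by
        rw [dV1]
        calc rotV * fl0V * rotV⁻¹ * (rotV * fl0V * rotV⁻¹) = rotV * (fl0V * fl0V) * rotV⁻¹ := by group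
          _ = 1 := by rw [fl0V_2]; group
      have q2 : dV2 * dV2 = 1 := by
        rw [dV2]
        calc rotV * dV1 * rotV⁻¹ * (rotV * dV1 * rotV⁻¹) = rotV * (dV1 * dV1) * rotV⁻¹ := by group
          _ = 1 := by rw [q1]; group
      have q3 : dV3 * dV3 = 1 := by
        rw [dV3]
        calc rotV * dV2 * rotV⁻¹ * (rotV * dV2 * rotV⁻¹) = rotV * (dV2 * dV2) * rotV⁻¹ := by group
          _ = 1 := by rw [q2]; group
      rw [show 8 = 4 * 2 from rfl, pow_mul, s4, pow_two]
      have e1 : Commute (fl0V * dV1) (dV2 * dV3) :=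
        (h02.mul_right h03).mul_left (h12.mul_right h13)
      rw [e1.symm.mul_mul_mul_comm, h01.symm.mul_mul_mul_comm, h23.symm.mul_mul_mul_comm, fl0V_2,
        q1, q2, q3]
      simp
    · rw [mul_assoc, t0, ← mul_assoc, h01.eq, mul_assoc]
    · rw [mul_assoc, t1, ← mul_assoc, h02.eq, mul_assoc]
    · rw [mul_assoc, t2, ← mul_assoc, h03.eq, mul_assoc]
    · rw [mul_assoc, t3]

/-- Two cocycles whose classes are independent modulo 8. -/
theorem two_cocycles : ∃ Fa Fb : (Fin 8 → Gam) → ℤ,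
    cd (1 : Representation ℤ Gam ℤ) 8 Fa = 0 ∧ cd (1 : Representation ℤ Gam ℤ) 8 Fb = 0 ∧
    (8 : ℤ) ∣ Ev tau0 8 Fa ∧ Odd (Ev tau1 8 Fa) ∧ Odd (Ev tau0 8 Fb) := by
  obtain ⟨Φa, ha0, ha1⟩ := VE_hom rotV (Or.inl rfl)
  obtain ⟨Φb, hb0, hb1⟩ := VE_hom (fl0V * rotV) (Or.inr rfl)
  obtain ⟨Fa, hFa, ka⟩ := exists_cocycle Φa
  obtain ⟨Fb, hFb, kb⟩ := exists_cocycle Φb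
  exact ⟨Fa, Fb, hFa, hFb, (ka _ tau0_pow).1 ha0, (ka _ tau1_pow).2 ha1, (kb _ tau0_pow).2 hb0⟩

end CE

end


section
open Matrix CategoryTheory groupCohomology

namespace CE

section
variable {Γ : Type} [Group Γ] {A : Type} [AddCommGroup A]

def cdL (ρ : Representation ℤ Γ A) (n : ℕ) : ((Fin n → Γ) → A) →ₗ[ℤ] ((Fin (n + 1) → Γ) → A) where
  toFun := cd ρ n
  map_add' x y := by rw [← cd_eq, ← cd_eq, ← cd_eq, map_add]
  map_smul' x y := by rw [← cd_eq, ← cd_eq, map_smul]; rfl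

lemma cdL_apply (ρ : Representation ℤ Γ A) (n : ℕ) (F) : cdL ρ n F = cd ρ n F := rfl

/-- the cocycle with a given underlying function -/
noncomputable def mkZ (ρ : Representation ℤ Γ A) (n : ℕ) (F : LinearMap.ker (cdL ρ n)) :
    cocycles (Rep.of ρ) n :=
  cocyclesMk (A := Rep.of ρ) F.1 ((cd_eq ρ n F.1).trans F.2)

lemma i_mkZ (ρ : Representation ℤ Γ A) (n : ℕ) (F : LinearMap.ker (cdL ρ n)) :
    iCocycles (Rep.of ρ) n (mkZ ρ n F) = F.1 :=
  iCocycles_mk (A := Rep.of ρ) F.1 ((cd_eq ρ n F.1).trans F.2)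

lemma i_inj (ρ : Representation ℤ Γ A) (n : ℕ) :
    Function.Injective (iCocycles (Rep.of ρ) n) :=
  (ModuleCat.mono_iff_injective _).1 inferInstance

/-- class of a cocycle -/
noncomputable def cls (ρ : Representation ℤ Γ A) (n : ℕ) :
    LinearMap.ker (cdL ρ n) →+ groupCohomology (Rep.of ρ) n where
  toFun F := π (Rep.of ρ) n (mkZ ρ n F)
  map_add' x y := by
    rw [← map_add]
    congr 1
    apply i_inj
    rw [i_mkZ, map_add, i_mkZ, i_mkZ]; rfl
  map_zero' := by
    have : mkZ ρ n 0 = 0 := by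
      apply i_inj
      rw [i_mkZ, map_zero]; rfl
    rw [this, map_zero]

lemma cls_apply (ρ : Representation ℤ Γ A) (n : ℕ) (F : LinearMap.ker (cdL ρ n)) :
    cls ρ n F = π (Rep.of ρ) n (mkZ ρ n F) := rfl

lemma exists_mkZ (ρ : Representation ℤ Γ A) (n : ℕ) (z : cocycles (Rep.of ρ) n) :
    ∃ F, z = mkZ ρ n F := by
  have h : cd ρ n (iCocycles (Rep.of ρ) n z) = 0 := by
    rw [← cd_eq]
    have := (inhomogeneousCochains (Rep.of ρ)).iCycles_d n (n + 1)
    rw [inhomogeneousCochains.d_def] at this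
    exact congrArg (fun f => f.hom z) this
  exact ⟨⟨iCocycles (Rep.of ρ) n z, h⟩, i_inj ρ n (by rw [i_mkZ])⟩

lemma cls_surj (ρ : Representation ℤ Γ A) (n : ℕ) : Function.Surjective (cls ρ n) := by
  intro x
  induction x using groupCohomology_induction_on with
  | h x =>
    obtain ⟨F, rfl⟩ := exists_mkZ ρ n x
    exact ⟨F, rfl⟩

lemma cls_eq_zero (ρ : Representation ℤ Γ A) (n : ℕ) (F : LinearMap.ker (cdL ρ (n + 1))) :
    cls ρ (n + 1) F = 0 ↔ ∃ G, cd ρ n G = F.1 := by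
  have ex : (ShortComplex.mk ((inhomogeneousCochains (Rep.of ρ)).toCycles n (n + 1))
      ((inhomogeneousCochains (Rep.of ρ)).homologyπ (n + 1)) (by simp)).Exact :=
    ShortComplex.exact_of_g_is_cokernel _
      ((inhomogeneousCochains (Rep.of ρ)).homologyIsCokernel n (n + 1) (by simp))
  rw [ShortComplex.moduleCat_exact_iff] at ex
  have key : ∀ G, iCocycles (Rep.of ρ) (n + 1) (toCocycles (Rep.of ρ) n (n + 1) G) = cd ρ n G := by
    intro G
    have := (inhomogeneousCochains (Rep.of ρ)).toCycles_i n (n + 1)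
    rw [inhomogeneousCochains.d_def] at this
    rw [← cd_eq]
    exact congrArg (fun f => f.hom G) this
  constructor
  · intro h
    obtain ⟨G, hG⟩ := ex _ h
    refine ⟨G, ?_⟩
    rw [← key, ← i_mkZ]
    exact congrArg _ hG
  · rintro ⟨G, hG⟩
    have : mkZ ρ (n + 1) F = toCocycles (Rep.of ρ) n (n + 1) G := by
      apply i_inj
      rw [key, i_mkZ, hG]
    rw [cls_apply, this]
    have := (inhomogeneousCochains (Rep.of ρ)).toCycles_comp_homologyπ n (n + 1)
    exact congrArg (fun f => f.hom G) this
end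

theorem lhs : ∃ a b : H 8, 4 • a ≠ 0 ∧ 4 • b ≠ 0 ∧ 4 • a ≠ 4 • b := by
  obtain ⟨Fa, Fb, ha, hb, a0, a1, b0⟩ := two_cocycles
  let ρ : Representation ℤ Gam ℤ := 1
  let za : LinearMap.ker (cdL ρ 8) := ⟨Fa, ha⟩
  let zb : LinearMap.ker (cdL ρ 8) := ⟨Fb, hb⟩
  have key : ∀ (z : LinearMap.ker (cdL ρ 8)), cls ρ 8 z = 0 → ∀ τ : Gam, τ ^ 8 = 1 →
      (8 : ℤ) ∣ Ev τ 8 z.1 := by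
    intro z hz τ hτ
    obtain ⟨G, hG⟩ := (cls_eq_zero ρ 7 z).1 hz
    rw [← hG]
    exact Ev_cobound τ hτ G
  have four : ∀ (τ : Gam) (F : (Fin 8 → Gam) → ℤ), Ev τ 8 (4 • F) = 4 * Ev τ 8 F := by
    intro τ F
    rw [show 4 • F = F + F + (F + F) by module, Ev_add, Ev_add]
    ring
  have odd : ∀ x : ℤ, Odd x → ¬ (8 : ℤ) ∣ 4 * x := by
    intro x hx
    rcases hx with ⟨y, rfl⟩
    omega
  refine ⟨cls ρ 8 za, cls ρ 8 zb, fun h => ?_, fun h => ?_, fun h => ?_⟩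
  · have := key (4 • za) (by rw [map_nsmul]; exact h) tau1 tau1_pow
    exact odd _ a1 (by rw [← four]; exact this)
  · have := key (4 • zb) (by rw [map_nsmul]; exact h) tau0 tau0_pow
    exact odd _ b0 (by rw [← four]; exact this)
  · have := key (4 • zb - 4 • za) (by
      rw [map_sub, map_nsmul, map_nsmul, sub_eq_zero]; exact h.symm) tau0 tau0_pow
    refine odd _ b0 ?_
    have e : Ev tau0 8 (4 • Fb - 4 • Fa) = 4 * Ev tau0 8 Fb - 4 * Ev tau0 8 Fa := by
      rw [Ev_sub, four, four]
    have h2 : (8 : ℤ) ∣ 4 * Ev tau0 8 Fb - 4 * Ev tau0 8 Fa := by rw [← e]; exact this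
    omega

end CE

end


section
open Matrix CategoryTheory groupCohomology

namespace CE

/-- `M` can be generated by `n` elements. -/
def GenBy (n : ℕ) (M : Type) [AddCommGroup M] : Prop :=
  ∃ f : (Fin n → ℤ) →+ M, Function.Surjective f

lemma GenBy.of_surj {n : ℕ} {M N : Type} [AddCommGroup M] [AddCommGroup N] (h : GenBy n M)
    (f : M →+ N) (hf : Function.Surjective f) : GenBy n N := by
  obtain ⟨g, hg⟩ := h
  exact ⟨f.comp g, hf.comp hg⟩

lemma GenBy.mono {n m : ℕ} {M : Type} [AddCommGroup M] (h : GenBy n M) (hnm : n ≤ m) :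
    GenBy m M := by
  obtain ⟨g, hg⟩ := h
  refine ⟨g.comp ((LinearMap.funLeft ℤ ℤ (Fin.castLE hnm)).toAddMonoidHom), hg.comp ?_⟩
  exact LinearMap.funLeft_surjective_of_injective ℤ ℤ _ (Fin.castLE_injective hnm)

lemma GenBy.of_inj {n : ℕ} {M N : Type} [AddCommGroup M] [AddCommGroup N] (h : GenBy n N)
    (f : M →+ N) (hf : Function.Injective f) : GenBy n M := by
  obtain ⟨g, hg⟩ := h
  let P : Submodule ℤ (Fin n → ℤ) := (f.range.comap g).toIntSubmodule
  obtain ⟨m, b⟩ := Submodule.basisOfPid (Pi.basisFun ℤ (Fin n)) P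
  have hm : m ≤ n := by
    have h1 := Submodule.finrank_le P
    rw [Module.finrank_eq_card_basis b] at h1
    simpa using h1
  have hc : ∀ x : P, ∃ y, f y = g x.1 := fun x => x.2
  choose s hs using hc
  refine GenBy.mono ⟨((AddMonoidHom.mk' s (fun x y => hf (by
    rw [map_add, hs, hs, hs, ← map_add]; rfl))).comp b.equivFun.symm.toAddMonoidHom), ?_⟩ hm
  intro y
  obtain ⟨x, hx⟩ := hg (f y)
  refine ⟨b.equivFun ⟨x, ⟨y, hx.symm⟩⟩, hf ?_⟩
  show f (s (b.equivFun.symm (b.equivFun _))) = _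
  rw [LinearEquiv.symm_apply_apply, hs, hx]

lemma GenBy.ext {a c : ℕ} {A B C : Type} [AddCommGroup A] [AddCommGroup B] [AddCommGroup C]
    (hA : GenBy a A) (hC : GenBy c C) (f : A →+ B) (g : B →+ C)
    (hfg : ∀ x, g x = 0 → ∃ y, f y = x) : GenBy (a + c) B := by
  obtain ⟨u, hu⟩ := hA
  obtain ⟨v, hv⟩ := hC.of_inj g.range.subtype Subtype.val_injective
  have hc : ∀ i : Fin c, ∃ y, g y = (v (Pi.single i 1)).1 := fun i => (v (Pi.single i 1)).2
  choose s hs using hc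
  let w : (Fin c → ℤ) →+ B := (Fintype.linearCombination ℤ s).toAddMonoidHom
  have hw : ∀ z, g (w z) = (v z).1 := by
    intro z
    show g (Fintype.linearCombination ℤ s z) = _
    rw [Fintype.linearCombination_apply, map_sum]
    conv_rhs => rw [pi_eq_sum_univ' z, map_sum]
    rw [AddSubgroup.val_finset_sum]
    refine Finset.sum_congr rfl fun i _ => ?_
    rw [map_zsmul, hs, map_zsmul]
    rfl
  refine ⟨AddMonoidHom.mk' (fun z => f (u (fun i => z (Fin.castAdd c i))) +
    w (fun i => z (Fin.natAdd a i))) (fun x y => ?_), fun x => ?_⟩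
  · have e1 : (fun i => (x + y) (Fin.castAdd c i)) = (fun i => x (Fin.castAdd c i)) +
      fun i => y (Fin.castAdd c i) := rfl
    have e2 : (fun i => (x + y) (Fin.natAdd a i)) = (fun i => x (Fin.natAdd a i)) +
      fun i => y (Fin.natAdd a i) := rfl
    rw [e1, e2, map_add, map_add, map_add]
    abel
  · obtain ⟨z, hz⟩ := hv ⟨g x, x, rfl⟩
    obtain ⟨y, hy⟩ := hfg (x - w z) (by rw [map_sub, hw, hz, sub_self])
    obtain ⟨y', rfl⟩ := hu y
    refine ⟨Fin.append y' z, ?_⟩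
    show f (u (fun i => Fin.append y' z (Fin.castAdd c i))) +
      w (fun i => Fin.append y' z (Fin.natAdd a i)) = x
    simp only [Fin.append_left, Fin.append_right]
    rw [hy]
    abel

lemma rep_exact {R Γ : Type} [CommRing R] [Group Γ] (S : ShortComplex (Rep.{0} R Γ))
    (h : ∀ x, S.g.hom x = 0 → ∃ y, S.f.hom y = x) : S.Exact := by
  have := S.exact_map_iff_of_faithful (forget₂ (Rep.{0} R Γ) (ModuleCat.{0} R))
  rw [← this, ShortComplex.moduleCat_exact_iff]
  exact h

section
variable {Γ : Type} [CommGroup Γ] (p : Γ →* Multiplicative ℤ) (t : Γ)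

noncomputable abbrev CI : Rep ℤ Γ := Rep.coind p.ker.subtype (Rep.trivial ℤ p.ker ℤ)

lemma CI_mem (f : Γ → ℤ) : f ∈ Representation.coindV p.ker.subtype (Rep.trivial ℤ p.ker ℤ).ρ ↔
    ∀ s ∈ p.ker, ∀ h, f (s * h) = f h := by
  constructor
  · intro hf s hs h
    exact hf ⟨s, hs⟩ h
  · intro hf s h
    exact hf s.1 s.2 h

noncomputable def ciMap₁ : Rep.trivial ℤ Γ ℤ ⟶ CI p := Rep.ofHom
  { toFun := fun n => ⟨fun _ => n, (CI_mem p _).2 fun _ _ _ => rfl⟩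
    map_add' := fun _ _ => rfl
    map_smul' := fun _ _ => rfl
    isIntertwining' := fun g => rfl }

noncomputable def ciMap₂ : CI p ⟶ CI p := Rep.ofHom
  { toFun := fun f => ⟨fun h => f.1 (t * h) - f.1 h, (CI_mem p _).2 fun s hs h => by
        rw [(CI_mem p _).1 f.2 s hs h, mul_left_comm, (CI_mem p _).1 f.2 s hs]⟩
    map_add' := fun x y => by
      apply Subtype.ext; funext h
      show (x.1 (t * h) + y.1 (t * h)) - (x.1 h + y.1 h) = (x.1 (t * h) - x.1 h) + (y.1 (t * h) - y.1 h)
      ring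
    map_smul' := fun r x => by
      apply Subtype.ext; funext h
      show r * (x.1 (t * h)) - r * x.1 h = r * (x.1 (t * h) - x.1 h)
      ring
    isIntertwining' := fun g => by
      apply LinearMap.ext; intro x
      apply Subtype.ext; funext h
      show x.1 (t * h * g) - x.1 (h * g) = x.1 (t * (h * g)) - x.1 (h * g)
      rw [mul_assoc] }

noncomputable def ciSC : ShortComplex (Rep ℤ Γ) where
  X₁ := Rep.trivial ℤ Γ ℤ
  X₂ := CI p
  X₃ := CI p
  f := ciMap₁ p
  g := ciMap₂ p t
  zero := by
    ext x
    exact sub_self (1 : ℤ)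

variable (ht : p t = Multiplicative.ofAdd 1)
include ht

lemma CI_eq (f : CI p) (g h : Γ) (hgh : p g = p h) : f.1 g = f.1 h := by
  have := (CI_mem p _).1 f.2 (g * h⁻¹) (by rw [MonoidHom.mem_ker, map_mul, map_inv, hgh, mul_inv_cancel]) h
  rwa [inv_mul_cancel_right] at this

lemma p_zpow (n : ℤ) : p (t ^ n) = Multiplicative.ofAdd n := by
  rw [map_zpow, ht, ← ofAdd_zsmul, smul_eq_mul, mul_one]

lemma ciSC_exact : (ciSC p t).ShortExact := by
  have hinj : Function.Injective (ciMap₁ p).hom := by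
    intro x y h
    exact congrFun (congrArg Subtype.val h) 1
  have hsurj : Function.Surjective (ciMap₂ p t).hom := by
    intro f
    -- discrete antiderivative
    have : ∃ G : ℤ → ℤ, ∀ n, G (n + 1) - G n = f.1 (t ^ n) := by
      refine ⟨fun n => ∑ i ∈ Finset.Ico 0 n, f.1 (t ^ i) - ∑ i ∈ Finset.Ico n 0, f.1 (t ^ i), fun n => ?_⟩
      beta_reduce
      rcases lt_or_ge n 0 with hn | hn
      · rw [Finset.Ico_eq_empty_of_le (show n ≤ 0 by omega), Finset.Ico_eq_empty_of_le (show n + 1 ≤ 0 by omega),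
          ← Finset.sum_erase_add _ _ (Finset.mem_Ico.2 ⟨le_refl n, hn⟩)]
        have : (Finset.Ico n 0).erase n = Finset.Ico (n + 1) 0 := by ext i; simp only [Finset.mem_erase, Finset.mem_Ico]; omega
        rw [this]; simp
      · rw [Finset.Ico_eq_empty_of_le (show 0 ≤ n by omega), Finset.Ico_eq_empty_of_le (show 0 ≤ n + 1 by omega),
          ← Finset.sum_erase_add _ _ (Finset.mem_Ico.2 ⟨hn, lt_add_one n⟩)]
        have : (Finset.Ico 0 (n + 1)).erase n = Finset.Ico 0 n := by ext i; simp only [Finset.mem_erase, Finset.mem_Ico]; omega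
        rw [this]; simp
    obtain ⟨G, hG⟩ := this
    refine ⟨⟨fun h => G (p h).toAdd, (CI_mem p _).2 fun s hs h => by
      rw [map_mul, (MonoidHom.mem_ker).1 hs, one_mul]⟩, ?_⟩
    apply Subtype.ext; funext h
    show G (p (t * h)).toAdd - G (p h).toAdd = f.1 h
    rw [map_mul, ht, toAdd_mul, toAdd_ofAdd, add_comm, hG]
    exact CI_eq p t ht f _ _ (by rw [p_zpow p t ht, ofAdd_toAdd])
  have hex : ∀ f, (ciMap₂ p t).hom f = 0 → ∃ n, (ciMap₁ p).hom n = f := by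
    intro f hf
    have h1 : ∀ h, f.1 (t * h) = f.1 h := fun h => sub_eq_zero.1 (congrFun (congrArg Subtype.val hf) h)
    have h2 : ∀ n : ℕ, ∀ h, f.1 (t ^ n * h) = f.1 h := by
      intro n
      induction n with
      | zero => intro h; rw [pow_zero, one_mul]
      | succ n ih => intro h; rw [pow_succ, mul_assoc, ih, h1]
    have h3 : ∀ n : ℤ, f.1 (t ^ n) = f.1 1 := by
      intro n
      rcases le_total 0 n with hn | hn
      · lift n to ℕ using hn
        have := h2 n 1
        rw [mul_one] at this
        rw [zpow_natCast, this]
      · have := h2 n.natAbs (t ^ n)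
        rw [← zpow_natCast, ← _root_.zpow_add, show (n.natAbs : ℤ) + n = 0 by omega, zpow_zero] at this
        exact this.symm
    refine ⟨f.1 1, ?_⟩
    apply Subtype.ext; funext h
    show f.1 1 = f.1 h
    rw [← h3 (p h).toAdd]
    exact CI_eq p t ht f _ _ (by rw [p_zpow p t ht, ofAdd_toAdd])
  exact
    { exact := by
        exact rep_exact _ hex
      mono_f := (Rep.mono_iff_injective _).2 hinj
      epi_g := (Rep.epi_iff_surjective _).2 hsurj }

lemma gen_step (j c d : ℕ) (h1 : GenBy c (groupCohomology (Rep.trivial ℤ p.ker ℤ) j))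
    (h2 : GenBy d (groupCohomology (Rep.trivial ℤ p.ker ℤ) (j + 1))) :
    GenBy (c + d) (groupCohomology (Rep.trivial ℤ Γ ℤ) (j + 1)) := by
  have k : ∀ i e, GenBy e (groupCohomology (Rep.trivial ℤ p.ker ℤ) i) →
      GenBy e (groupCohomology (CI p) i) := by
    intro i e he
    let w := (coindIso (Rep.trivial ℤ p.ker ℤ) i).toLinearEquiv
    exact he.of_surj w.symm.toLinearMap.toAddMonoidHom w.symm.surjective
  have ex := mapShortComplex₁_exact (ciSC_exact p t ht) (i := j) (j := j + 1) rfl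
  rw [ShortComplex.moduleCat_exact_iff] at ex
  exact GenBy.ext (k _ _ h1) (k _ _ h2) (mapShortComplex₁ (ciSC_exact p t ht) (i := j) (j := j + 1) rfl).f.hom.toAddMonoidHom
    (mapShortComplex₁ (ciSC_exact p t ht) (i := j) (j := j + 1) rfl).g.hom.toAddMonoidHom ex

end

lemma gen_zero (Γ : Type) [Group Γ] : GenBy 1 (groupCohomology (Rep.trivial ℤ Γ ℤ) 0) := by
  refine GenBy.of_inj (N := ℤ) ⟨(LinearEquiv.funUnique (Fin 1) ℤ ℤ).toAddMonoidHom,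
    (LinearEquiv.funUnique (Fin 1) ℤ ℤ).surjective⟩ ?_ ?_ 
  · exact (AddMonoidHom.comp (Submodule.subtype _).toAddMonoidHom
      (H0Iso (Rep.trivial ℤ Γ ℤ)).toLinearEquiv.toLinearMap.toAddMonoidHom)
  · exact Subtype.val_injective.comp (H0Iso (Rep.trivial ℤ Γ ℤ)).toLinearEquiv.injective

lemma gen_of_subsingleton {n : ℕ} {M : Type} [AddCommGroup M] (h : Subsingleton M) : GenBy n M :=
  ⟨0, fun x => ⟨0, Subsingleton.elim _ _⟩⟩

theorem gen_lat (n : ℕ) : ∀ (Γ : Type) [CommGroup Γ], Nonempty (Γ ≃* Crystal.Lat n) → ∀ j : ℕ,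
    GenBy (n.choose j) (groupCohomology (Rep.trivial ℤ Γ ℤ) j) := by
  induction n with
  | zero =>
    rintro Γ _ ⟨e⟩ j
    cases j with
    | zero => exact gen_zero Γ
    | succ j =>
      have : Subsingleton Γ := e.toEquiv.subsingleton
      exact gen_of_subsingleton
        (ModuleCat.subsingleton_of_isZero (isZero_groupCohomology_succ_of_subsingleton _ _))
  | succ n ih =>
    rintro Γ _ ⟨e⟩ j
    cases j with
    | zero => rw [Nat.choose_zero_right]; exact gen_zero Γ
    | succ j =>
      rw [Nat.choose_succ_succ]
      let p0 : Crystal.Lat (n + 1) →* Multiplicative ℤ :=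
        AddMonoidHom.toMultiplicative (Pi.evalAddMonoidHom (fun _ => ℤ) 0)
      let p : Γ →* Multiplicative ℤ := p0.comp e.toMonoidHom
      have hp : ∀ g, (p g).toAdd = (e g).toAdd 0 := fun g => rfl
      let e' : p.ker ≃* Crystal.Lat n :=
        { toFun := fun g => Multiplicative.ofAdd (Fin.tail (e g.1).toAdd)
          invFun := fun v => ⟨e.symm (Multiplicative.ofAdd (Fin.cons 0 v.toAdd)), by
            rw [MonoidHom.mem_ker]
            apply Multiplicative.toAdd.injective
            rw [hp, e.apply_symm_apply]
            rfl⟩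
          left_inv := fun g => by
            apply Subtype.ext
            apply e.injective
            show e (e.symm _) = _
            rw [e.apply_symm_apply]
            apply Multiplicative.toAdd.injective
            have : (e g.1).toAdd 0 = 0 := by
              rw [← hp, MonoidHom.mem_ker.1 g.2]; rfl
            rw [toAdd_ofAdd, toAdd_ofAdd, ← this]
            exact Fin.cons_self_tail _
          right_inv := fun v => by
            show Multiplicative.ofAdd (Fin.tail (e (e.symm _)).toAdd) = v
            rw [e.apply_symm_apply]
            rfl
          map_mul' := fun g h => by
            show Multiplicative.ofAdd (Fin.tail (e (g.1 * h.1)).toAdd) = _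
            rw [map_mul]
            rfl }
      have := ih p.ker ⟨e'⟩
      refine gen_step p (e.symm (Multiplicative.ofAdd (Pi.single 0 1))) ?_ j _ _ (this j) (this (j + 1))
      apply Multiplicative.toAdd.injective
      rw [hp, e.apply_symm_apply]
      simp

end CE

end


section
open Matrix CategoryTheory groupCohomology

namespace CE

section
variable {Γ : Type} [CommGroup Γ]

/-- Alternating evaluation of a cochain on a tuple. -/
def alt {n : ℕ} (v : Fin n → Γ) : ((Fin n → Γ) → ℤ) →+ ℤ where
  toFun F := ∑ σ : Equiv.Perm (Fin n), (Equiv.Perm.sign σ : ℤ) * F (fun i => v (σ i))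
  map_zero' := by simp
  map_add' F G := by simp [mul_add, Finset.sum_add_distrib]

lemma alt_apply {n : ℕ} (v : Fin n → Γ) (F : (Fin n → Γ) → ℤ) :
    alt v F = ∑ σ : Equiv.Perm (Fin n), (Equiv.Perm.sign σ : ℤ) * F (fun i => v (σ i)) := rfl

lemma contract_swap {n : ℕ} (i : Fin n) (w : Fin (n + 1) → Γ) :
    Fin.contractNth i.castSucc (· * ·) (fun k => w (Equiv.swap i.castSucc i.succ k)) =
      Fin.contractNth i.castSucc (· * ·) w := by
  funext k
  rcases lt_trichotomy (k : ℕ) (i.castSucc : Fin (n + 1)) with h | h | h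
  · rw [Fin.contractNth_apply_of_lt _ _ _ _ h, Fin.contractNth_apply_of_lt _ _ _ _ h,
      Equiv.swap_apply_of_ne_of_ne]
    · intro e; rw [Fin.ext_iff] at e; simp at h e; omega
    · intro e; rw [Fin.ext_iff] at e; simp at h e; omega
  · rw [Fin.contractNth_apply_of_eq _ _ _ _ h, Fin.contractNth_apply_of_eq _ _ _ _ h]
    have : k = i := Fin.ext (by simpa using h)
    subst this
    rw [Equiv.swap_apply_left, Equiv.swap_apply_right]
    exact mul_comm _ _
  · rw [Fin.contractNth_apply_of_gt _ _ _ _ h, Fin.contractNth_apply_of_gt _ _ _ _ h,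
      Equiv.swap_apply_of_ne_of_ne]
    · intro e; rw [Fin.ext_iff] at e; simp at h e; omega
    · intro e; rw [Fin.ext_iff] at e; simp at h e; omega

lemma contract_last {n : ℕ} (w : Fin (n + 1) → Γ) :
    Fin.contractNth (Fin.last n) (· * ·) w = fun k => w k.castSucc := by
  funext k
  exact Fin.contractNth_apply_of_lt _ _ _ _ (by simp)

/-- alternating evaluation kills coboundaries -/
lemma alt_cd {n : ℕ} (v : Fin (n + 1) → Γ) (F : (Fin n → Γ) → ℤ) :
    alt v (cd (1 : Representation ℤ Γ ℤ) n F) = 0 := by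
  rw [alt_apply]
  have e : ∀ w : Fin (n + 1) → Γ, cd (1 : Representation ℤ Γ ℤ) n F w =
      F (fun k => w k.succ) + (-1) ^ (n + 1) * F (fun k => w k.castSucc) +
      ∑ i : Fin n, (-1) ^ ((i : ℕ) + 1) * F (Fin.contractNth i.castSucc (· * ·) w) := by
    intro w
    show F (fun k => w k.succ) + ∑ j : Fin (n + 1), (-1 : ℤ) ^ ((j : ℕ) + 1) * F (Fin.contractNth j (· * ·) w) = _
    rw [Fin.sum_univ_castSucc, contract_last]
    simp only [Fin.val_castSucc, Fin.val_last]
    ring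
  simp only [e, mul_add, Finset.sum_add_distrib, Finset.mul_sum]
  have h1 : ∑ σ : Equiv.Perm (Fin (n + 1)), (Equiv.Perm.sign σ : ℤ) * F (fun k => v (σ k.succ)) =
      (-1) ^ n * ∑ σ : Equiv.Perm (Fin (n + 1)), (Equiv.Perm.sign σ : ℤ) * F (fun k => v (σ k.castSucc)) := by
    rw [Finset.mul_sum, ← Equiv.sum_comp (Equiv.mulRight (finRotate (n + 1)))
      (fun σ : Equiv.Perm (Fin (n + 1)) => (-1) ^ n * ((Equiv.Perm.sign σ : ℤ) * F (fun k => v (σ k.castSucc))))]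
    refine Finset.sum_congr rfl fun σ _ => ?_
    rw [Equiv.coe_mulRight, map_mul, sign_finRotate]
    have : ∀ k : Fin n, (σ * finRotate (n + 1)) k.castSucc = σ k.succ := by
      intro k
      rw [Equiv.Perm.mul_apply, finRotate_succ_apply, Fin.coeSucc_eq_succ]
    simp only [this]
    push_cast
    have : ((-1 : ℤ) ^ n) * (-1) ^ n = 1 := by rw [← mul_pow]; simp
    linear_combination (- (Equiv.Perm.sign σ : ℤ) * F (fun k => v (σ k.succ))) * this
  have h2 : ∀ i : Fin n, ∑ σ : Equiv.Perm (Fin (n + 1)), (Equiv.Perm.sign σ : ℤ) *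
      ((-1) ^ ((i : ℕ) + 1) * F (Fin.contractNth i.castSucc (· * ·) (fun k => v (σ k)))) = 0 := by
    intro i
    have h3 := Equiv.sum_comp (Equiv.mulRight (Equiv.swap i.castSucc i.succ))
      (fun σ : Equiv.Perm (Fin (n + 1)) => (Equiv.Perm.sign σ : ℤ) *
        ((-1) ^ ((i : ℕ) + 1) * F (Fin.contractNth i.castSucc (· * ·) (fun k => v (σ k)))))
    have h4 : ∀ σ : Equiv.Perm (Fin (n + 1)), Fin.contractNth i.castSucc (· * ·)
        (fun k => v ((σ * Equiv.swap i.castSucc i.succ) k)) =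
        Fin.contractNth i.castSucc (· * ·) (fun k => v (σ k)) :=
      fun σ => contract_swap i (fun k => v (σ k))
    simp only [Equiv.coe_mulRight, h4, map_mul,
      Equiv.Perm.sign_swap (show i.castSucc ≠ i.succ from (Fin.castSucc_lt_succ).ne)] at h3
    simp at h3
    linarith
  rw [Finset.sum_comm, Finset.sum_eq_zero (fun i _ => h2 i), h1, add_zero, Finset.mul_sum, ← Finset.sum_add_distrib]
  refine Finset.sum_eq_zero fun σ _ => ?_
  ring

/-- product of additive characters -/
def prodF {n : ℕ} (l : Fin n → Γ →* Multiplicative ℤ) : (Fin n → Γ) → ℤ :=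
  fun w => ∏ p, (l p (w p)).toAdd

lemma cd_prodF {n : ℕ} (l : Fin n → Γ →* Multiplicative ℤ) :
    cd (1 : Representation ℤ Γ ℤ) n (prodF l) = 0 := by
  induction n with
  | zero => funext w; simp [cd, prodF]
  | succ n ih =>
    funext w
    have ih' := congrFun (ih (fun p => l p.succ)) (fun i => w i.succ)
    have hw : w = Fin.cons (w 0) (fun i => w i.succ) := (Fin.cons_self_tail w).symm
    have hc : ∀ (x : Γ) (u : Fin n → Γ), prodF l (Fin.cons x u) = (l 0 x).toAdd * prodF (fun p => l p.succ) u := by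
      intro x u
      simp [prodF, Fin.prod_univ_succ]
    have hs : ∀ u : Fin (n + 1) → Γ, prodF l u = (l 0 (u 0)).toAdd * prodF (fun p => l p.succ) (fun i => u i.succ) := by
      intro u
      simp [prodF, Fin.prod_univ_succ]
    change prodF (fun p => l p.succ) (fun i => w i.succ.succ) + ∑ j : Fin (n + 1), (-1 : ℤ) ^ ((j : ℕ) + 1) *
      prodF (fun p => l p.succ) (Fin.contractNth j (· * ·) (fun i => w i.succ)) = 0 at ih'
    show prodF l (fun i => w i.succ) + ∑ j : Fin (n + 2), (-1 : ℤ) ^ ((j : ℕ) + 1) *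
      prodF l (Fin.contractNth j (· * ·) w) = 0
    rw [Fin.sum_univ_succ]
    conv_lhs => rw [hw]
    simp only [contractNth_cons_zero, contractNth_cons_succ, hc, hs (fun i => w i.succ), map_mul, toAdd_mul, Fin.cons_succ, Fin.val_succ]
    have e : ∀ j : Fin (n + 1), (-1 : ℤ) ^ ((j : ℕ) + 1 + 1) * ((l 0 (w 0)).toAdd *
        prodF (fun p => l p.succ) (Fin.contractNth j (· * ·) (fun i => w i.succ))) = -(l 0 (w 0)).toAdd *
        ((-1 : ℤ) ^ ((j : ℕ) + 1) * prodF (fun p => l p.succ) (Fin.contractNth j (· * ·) (fun i => w i.succ))) := by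
      intro j; ring
    rw [Finset.sum_congr rfl (fun j _ => e j), ← Finset.mul_sum]
    have e0 : (-1 : ℤ) ^ (((0 : Fin (n + 2)) : ℕ) + 1) = -1 := by simp
    rw [e0]
    linear_combination (-(l 0 (w 0)).toAdd) * ih'

lemma alt_prodF {n : ℕ} (v : Fin n → Γ) (l : Fin n → Γ →* Multiplicative ℤ) :
    alt v (prodF l) = (Matrix.of fun a p => (l p (v a)).toAdd).det := by
  rw [alt_apply, Matrix.det_apply]
  refine Finset.sum_congr rfl fun σ _ => ?_
  rw [Units.smul_def, smul_eq_mul]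
  rfl

end
end CE

end


section
open Matrix CategoryTheory groupCohomology

namespace CE

abbrev LL : Type := Crystal.Lat 5

def ee (i : Fin 5) : LL := Multiplicative.ofAdd (Pi.single i 1)

def coord (i : Fin 5) : LL →* Multiplicative ℤ :=
  AddMonoidHom.toMultiplicative (Pi.evalAddMonoidHom (fun _ => ℤ) i)

lemma coord_apply (i : Fin 5) (x : LL) : (coord i x).toAdd = x.toAdd i := rfl

def holI : Matrix (Fin 5) (Fin 5) ℤ := holM ^ 7

lemma act_inv (l : LL) : act tgen⁻¹ l = Multiplicative.ofAdd (holI.mulVec l.toAdd) := by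
  rw [map_inv]
  apply (act tgen).injective
  rw [MulAut.apply_inv_self, act_tgen]
  rw [toAdd_ofAdd, Matrix.mulVec_mulVec, holI, ← pow_succ', holM_pow, Matrix.one_mulVec]
  rfl

/-- the representation `H^j(L)` -/
noncomputable abbrev AJ (j : ℕ) : Rep ℤ ZG := Crystal.cohRep act (1 : Representation ℤ ZG ℤ) j

abbrev one5 : Representation ℤ LL ℤ := 1

def compAct (g : ZG) (j : ℕ) (F : LinearMap.ker (cdL one5 j)) : LinearMap.ker (cdL one5 j) :=
  ⟨fun w => F.1 (fun i => act g⁻¹ (w i)), by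
    have h := F.2
    rw [LinearMap.mem_ker, cdL_apply] at h ⊢
    funext w
    have h2 := congrFun h (fun i => act g⁻¹ (w i))
    simp only [cd, Pi.zero_apply] at h2 ⊢
    rw [← h2]
    congr 1
    refine Finset.sum_congr rfl fun i _ => ?_
    congr 1
    refine congrArg F.1 (funext fun k => ?_)
    exact Crystal.comp_contractNth (act g⁻¹).toMonoidHom i w k⟩

lemma act_cls (g : ZG) (j : ℕ) (F : LinearMap.ker (cdL one5 j)) :
    (AJ j).ρ g (cls one5 j F) = cls one5 j (compAct g j F) := by
  let φ := Crystal.cochainsMap (Rep.of one5) (Rep.of one5) (act g⁻¹).toMonoidHom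
    ((1 : Representation ℤ ZG ℤ) g) (fun _ _ => rfl)
  have h1 := HomologicalComplex.homologyπ_naturality φ j
  have h2 := HomologicalComplex.cyclesMap_i φ j
  have h3 := congrArg (fun f => f.hom (mkZ one5 j F)) h1
  have h4 : (HomologicalComplex.cyclesMap φ j).hom (mkZ one5 j F) = mkZ one5 j (compAct g j F) := by
    apply i_inj
    refine Eq.trans ?_ (i_mkZ one5 j (compAct g j F)).symm
    have h5 := congrArg (fun f => f.hom (mkZ one5 j F)) h2
    refine Eq.trans h5 ?_
    exact congrArg (φ.f j).hom (i_mkZ one5 j F)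
  refine Eq.trans h3 ?_
  exact congrArg (fun z => π (Rep.of one5) j z) h4

theorem coh_model (n m : ℕ) (hm : Nat.choose 5 (n + 1) = m) (I : Fin m → Fin (n + 1) → Fin 5)
    (hI : ∀ a b, (Matrix.of fun p q => if I b q = I a p then (1 : ℤ) else 0).det = if a = b then 1 else 0)
    (B : Matrix (Fin m) (Fin m) ℤ)
    (hB : ∀ a b, B a b = (Matrix.of fun p q => holI (I b q) (I a p)).det) :
    ∃ e : (AJ (n + 1)) ≃+ (Fin m → ℤ), ∀ x, e ((AJ (n + 1)).ρ tgen x) = B *ᵥ (e x) := by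
  let altC : LinearMap.ker (cdL one5 (n + 1)) →+ (Fin m → ℤ) :=
    AddMonoidHom.mk' (fun F a => alt (fun p => ee (I a p)) F.1) (fun x y => by
      funext a
      exact map_add (alt _) _ _)
  have hC : ∀ F a, altC F a = alt (fun p => ee (I a p)) F.1 := fun _ _ => rfl
  have hk : (cls one5 (n + 1)).ker ≤ altC.ker := by
    intro F hF
    obtain ⟨G, hG⟩ := (cls_eq_zero one5 n F).1 hF
    rw [AddMonoidHom.mem_ker]
    funext a
    rw [hC, ← hG, alt_cd]; rfl
  let altH : groupCohomology (Rep.of one5) (n + 1) →+ (Fin m → ℤ) :=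
    AddMonoidHom.liftOfSurjective _ (cls_surj one5 (n + 1)) ⟨altC, hk⟩
  have hH : ∀ F, altH (cls one5 (n + 1) F) = altC F := fun F =>
    AddMonoidHom.liftOfRightInverse_comp_apply _ _ _ ⟨altC, hk⟩ F
  let bF : Fin m → LinearMap.ker (cdL one5 (n + 1)) := fun b =>
    ⟨prodF (fun q => coord (I b q)), cd_prodF _⟩
  have hb : ∀ b, altC (bF b) = Pi.single b 1 := by
    intro b
    funext a
    rw [hC, Pi.single_apply, ← hI]
    show alt _ (prodF _) = _
    rw [alt_prodF]
    congr 1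
    ext p q
    simp only [Matrix.of_apply, coord_apply]
    show (Pi.single (I a p) (1 : ℤ) : Fin 5 → ℤ) (I b q) = _
    rw [Pi.single_apply]
  let comb : (Fin m → ℤ) → LinearMap.ker (cdL one5 (n + 1)) := fun z => ∑ b, z b • bF b
  have hcomb : ∀ z, altC (comb z) = z := by
    intro z
    show altC (∑ b, z b • bF b) = z
    rw [map_sum]
    conv_rhs => rw [pi_eq_sum_univ' z]
    refine Finset.sum_congr rfl fun b _ => ?_
    rw [map_zsmul, hb]
  have hsurj : Function.Surjective altH := fun z => ⟨cls one5 (n + 1) (comb z), by rw [hH, hcomb]⟩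
  have hg := gen_lat 5 LL ⟨MulEquiv.refl _⟩ (n + 1)
  rw [hm] at hg
  obtain ⟨gen, hgen⟩ := hg
  have hinj : Function.Injective altH := by
    have h1 : Function.Surjective (altH.comp gen).toIntLinearMap := hsurj.comp hgen
    have h2 := OrzechProperty.injective_of_surjective_endomorphism _ h1
    intro x y hxy
    obtain ⟨x, rfl⟩ := hgen x
    obtain ⟨y, rfl⟩ := hgen y
    exact congrArg gen (h2 hxy)
  refine ⟨AddEquiv.ofBijective altH ⟨hinj, hsurj⟩, fun x => ?_⟩
  obtain ⟨F, hF⟩ := cls_surj one5 (n + 1) x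
  let z := altC F
  have hx : x = cls one5 (n + 1) (comb z) := by
    apply hinj
    rw [hH, hcomb, ← hF, hH]
  have hcompS : compAct tgen (n + 1) (comb z) = ∑ b, z b • compAct tgen (n + 1) (bF b) := by
    apply Subtype.ext
    funext w
    show (comb z).1 _ = _
    simp only [comb, AddSubmonoidClass.coe_finset_sum, Finset.sum_apply, SetLike.val_smul, Pi.smul_apply]
    rfl
  have hBb : ∀ a b, altC (compAct tgen (n + 1) (bF b)) a = B a b := by
    intro a b
    rw [hB, hC]
    show alt _ (prodF (fun q => (coord (I b q)).comp (act tgen⁻¹).toMonoidHom)) = _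
    rw [alt_prodF]
    congr 1
    ext p q
    simp only [Matrix.of_apply]
    show ((coord (I b q)) (act tgen⁻¹ (ee (I a p)))).toAdd = _
    rw [act_inv, coord_apply, toAdd_ofAdd]
    show (holI *ᵥ Pi.single (I a p) 1) (I b q) = _
    rw [Matrix.mulVec_single_one]; rfl
  rw [hx]
  show altH ((AJ (n + 1)).ρ tgen (cls one5 (n + 1) (comb z))) = B *ᵥ altH (cls one5 (n + 1) (comb z))
  rw [hH, hcomb]
  refine (congrArg altH (act_cls tgen (n + 1) (comb z))).trans ?_
  rw [hH, hcompS, map_sum]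
  funext a
  rw [Finset.sum_apply]
  refine Finset.sum_congr rfl fun b _ => ?_
  rw [map_zsmul, Pi.smul_apply, hBb, smul_eq_mul, mul_comm]

end CE

end


section
open Matrix CategoryTheory groupCohomology

namespace CE

lemma tgen_gen (x : ZG) : x ∈ Subgroup.zpowers tgen := by
  rw [zg_pow x]
  exact ⟨_, zpow_natCast _ _⟩

section
variable {R : Type} [CommRing R] (A : Rep.{0} R ZG)

lemma norm_sum (x : A) : A.ρ.norm x = ∑ i ∈ Finset.range 8, A.ρ (tgen ^ i) x := by
  rw [Representation.norm, LinearMap.sum_apply, Finset.sum_range]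
  refine Fintype.sum_equiv (Multiplicative.toAdd : ZG ≃ Fin 8) _ _ fun g => ?_
  conv_lhs => rw [zg_pow g]
  rfl

lemma epi_iso_inv {C : Type*} [Category C] {X Y : C} (f : X ≅ Y) : Epi f.inv := inferInstance

lemma evenSurj (i : ℕ) [NeZero i] (hi : Even i) : Function.Surjective
    (Rep.FiniteCyclicGroup.groupCohomologyπEven A tgen tgen_gen i hi) :=
  (ModuleCat.epi_iff_surjective _).1
    (@epi_comp _ _ _ _ _ _ (epi_iso_inv (Rep.FiniteCyclicGroup.normHomCompSub A tgen).moduleCatCyclesIso) _ (@epi_comp _ _ _ _ _ _ inferInstance _ inferInstance))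

lemma oddSurj (i : ℕ) (hi : Odd i) : Function.Surjective
    (Rep.FiniteCyclicGroup.groupCohomologyπOdd A tgen tgen_gen i hi) :=
  (ModuleCat.epi_iff_surjective _).1
    (@epi_comp _ _ _ _ _ _ (epi_iso_inv (Rep.FiniteCyclicGroup.subCompNormHom A tgen).moduleCatCyclesIso) _ (@epi_comp _ _ _ _ _ _ inferInstance _ inferInstance))

lemma even_kill (c : ℕ) (i : ℕ) [NeZero i] (hi : Even i)
    (h : ∀ x : A, A.ρ tgen x = x → ∃ y, A.ρ.norm y = c • x) (z : groupCohomology A i) :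
    c • z = 0 := by
  obtain ⟨x, rfl⟩ := evenSurj A i hi z
  rw [← map_nsmul]
  refine (Rep.FiniteCyclicGroup.groupCohomologyπEven_eq_zero_iff A tgen tgen_gen i hi _).2 ?_
  have hx : A.ρ tgen x.1 = x.1 := sub_eq_zero.1 x.2
  exact h x.1 hx

lemma odd_kill (c : ℕ) (i : ℕ) (hi : Odd i)
    (h : ∀ x : A, A.ρ.norm x = 0 → ∃ y, A.ρ tgen y - y = c • x) (z : groupCohomology A i) :
    c • z = 0 := by
  obtain ⟨x, rfl⟩ := oddSurj A i hi z
  rw [← map_nsmul]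
  refine (Rep.FiniteCyclicGroup.groupCohomologyπOdd_eq_zero_iff A tgen tgen_gen i hi _).2 ?_
  exact h x.1 x.2

variable {m : ℕ} (B N : Matrix (Fin m) (Fin m) ℤ) (e : A ≃+ (Fin m → ℤ))

lemma e_norm (he : ∀ x, e (A.ρ tgen x) = B *ᵥ e x) (hN : N = ∑ i ∈ Finset.range 8, B ^ i) (x : A) :
    e (A.ρ.norm x) = N *ᵥ e x := by
  have hp : ∀ i : ℕ, e (A.ρ (tgen ^ i) x) = (B ^ i) *ᵥ e x := by
    intro i
    induction i with
    | zero => simp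
    | succ i ih =>
      rw [pow_succ' tgen, map_mul, Module.End.mul_apply, he, ih, Matrix.mulVec_mulVec, ← pow_succ']
  rw [norm_sum, map_sum, hN, Matrix.sum_mulVec]
  exact Finset.sum_congr rfl fun i _ => hp i

lemma cert_use (X Y P Q : Matrix (Fin m) (Fin m) ℤ) (c d : ℕ) (hd : d ≠ 0)
    (h : (d : ℤ) • ((c : ℤ) • (1 : Matrix (Fin m) (Fin m) ℤ) - Y * P) = Q * X) (v : Fin m → ℤ) (hv : X *ᵥ v = 0) :
    Y *ᵥ (P *ᵥ v) = c • v := by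
  have h1 := congrArg (fun M => M *ᵥ v) h
  simp only [Matrix.smul_mulVec, Matrix.sub_mulVec, Matrix.one_mulVec, ← Matrix.mulVec_mulVec, hv,
    Matrix.mulVec_zero] at h1
  have h2 := (smul_eq_zero.1 h1).resolve_left (by exact_mod_cast hd)
  rw [natCast_zsmul] at h2
  exact (sub_eq_zero.1 h2).symm

lemma even_cert (he : ∀ x, e (A.ρ tgen x) = B *ᵥ e x) (hN : N = ∑ i ∈ Finset.range 8, B ^ i)
    (P Q : Matrix (Fin m) (Fin m) ℤ) (c d : ℕ) (hd : d ≠ 0)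
    (h : (d : ℤ) • ((c : ℤ) • (1 : Matrix (Fin m) (Fin m) ℤ) - N * P) = Q * (B - 1))
    (i : ℕ) [NeZero i] (hi : Even i) (z : groupCohomology A i) : c • z = 0 := by
  refine even_kill A c i hi (fun x hx => ⟨e.symm (P *ᵥ e x), e.injective ?_⟩) z
  rw [e_norm A B N e he hN, e.apply_symm_apply, map_nsmul]
  refine cert_use (B - 1) N P Q c d hd h _ ?_
  rw [Matrix.sub_mulVec, ← he, hx, Matrix.one_mulVec, sub_self]

lemma odd_cert (he : ∀ x, e (A.ρ tgen x) = B *ᵥ e x) (hN : N = ∑ i ∈ Finset.range 8, B ^ i)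
    (P Q : Matrix (Fin m) (Fin m) ℤ) (c d : ℕ) (hd : d ≠ 0)
    (h : (d : ℤ) • ((c : ℤ) • (1 : Matrix (Fin m) (Fin m) ℤ) - (B - 1) * P) = Q * N)
    (i : ℕ) (hi : Odd i) (z : groupCohomology A i) : c • z = 0 := by
  refine odd_kill A c i hi (fun x hx => ⟨e.symm (P *ᵥ e x), e.injective ?_⟩) z
  rw [map_sub, he, e.apply_symm_apply, map_nsmul]
  rw [← cert_use N (B - 1) P Q c d hd h (e x) ?_]
  · rw [Matrix.sub_mulVec, Matrix.one_mulVec]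
  · rw [← e_norm A B N e he hN, hx, map_zero]

/-- `H^i(G, A)` vanishes if `A` does -/
lemma sub_coh (hA : Subsingleton A) (i : ℕ) (z : groupCohomology A i) : z = 0 := by
  induction z using groupCohomology_induction_on with
  | h x =>
    have hi : Function.Injective (iCocycles A i) := (ModuleCat.mono_iff_injective _).1 inferInstance
    have hx : x = 0 := hi (funext fun w => hA.elim _ _)
    rw [hx, map_zero]

lemma zs_aux {M : Type} [AddCommGroup M] (y : M) (hy : 8 • y = 0) (n : ℤ) :
    4 • (n • y) = 0 ∨ 4 • (n • y) = 4 • y := by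
  have hy2 : (8 : ℤ) • y = 0 := by rw [← hy]; exact natCast_zsmul y 8
  have e4 : ∀ w : M, 4 • w = (4 : ℤ) • w := fun w => (natCast_zsmul w 4).symm
  rcases Int.even_or_odd' n with ⟨k, hk | hk⟩
  · left
    rw [e4, smul_smul, hk, show 4 * (2 * k) = k * 8 by ring, mul_smul, hy2, smul_zero]
  · right
    rw [e4, e4, smul_smul, hk, show 4 * (2 * k + 1) = k * 8 + 4 by ring, add_smul, mul_smul, hy2, smul_zero, zero_add]

/-- `4 H^8(G, A)` has at most two elements for `A` cyclic. -/
lemma coh8 (hA : GenBy 1 A) :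
    ∃ r : groupCohomology A 8, ∀ z : groupCohomology A 8, 4 • z = 0 ∨ 4 • z = r := by
  have h8 : ∀ z : groupCohomology A 8, 8 • z = 0 := by
    have : NeZero 8 := ⟨by norm_num⟩
    refine even_kill A 8 8 (by decide) fun x hx => ⟨x, ?_⟩
    have hp : ∀ i : ℕ, A.ρ (tgen ^ i) x = x := by
      intro i
      induction i with
      | zero => simp
      | succ i ih => rw [pow_succ', map_mul, Module.End.mul_apply, ih, hx]
    rw [norm_sum, Finset.sum_congr rfl fun i _ => hp i, Finset.sum_const, Finset.card_range]
  have h1 : GenBy 1 (groupCohomology A 8) := by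
    have : NeZero 8 := ⟨by norm_num⟩
    have hi := GenBy.of_inj hA
      (LinearMap.ker (A.applyAsHom tgen - 𝟙 A).hom.toLinearMap).subtype.toAddMonoidHom
      Subtype.val_injective
    exact hi.of_surj
      (Rep.FiniteCyclicGroup.groupCohomologyπEven A tgen tgen_gen 8 (by decide)).hom.toAddMonoidHom
      (evenSurj A 8 (by decide))
  obtain ⟨f, hf⟩ := h1
  have hall : ∀ z, ∃ n : ℤ, z = n • f (Pi.single 0 1) := by
    intro z
    obtain ⟨w, rfl⟩ := hf z
    refine ⟨w 0, ?_⟩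
    rw [← map_zsmul]
    congr 1
    funext k
    fin_cases k
    simp
  refine ⟨4 • f (Pi.single 0 1), fun z => ?_⟩
  obtain ⟨n, rfl⟩ := hall z
  exact zs_aux _ (h8 _) n
end

end CE

end


section
open Matrix CategoryTheory groupCohomology

namespace CE

/-- the sum of the first eight powers of a matrix, from its repeated squares -/
lemma norm_mat {m : ℕ} (B B2 B4 N : Matrix (Fin m) (Fin m) ℤ) (h2 : B * B = B2) (h4 : B2 * B2 = B4)
    (hN : (1 + B) * (1 + B2) * (1 + B4) = N) : N = ∑ i ∈ Finset.range 8, B ^ i := by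
  rw [← hN, ← h4, ← h2]
  simp only [Finset.sum_range_succ, Finset.sum_range_zero]
  noncomm_ring

def holJ : Matrix (Fin 5) (Fin 5) ℤ := !![-1, 1, 0, 0, 0; 0, 0, 1, 0, 0; 0, 0, 0, 1, 0; -1, 0, 0, 0, 1; -1, 0, 0, 0, 0]

lemma holI_eq : holI = holJ := by decide +kernel

def idx1 : Fin 5 → Fin (0 + 1) → Fin 5 := ![![0], ![1], ![2], ![3], ![4]]
def mB1 : Matrix (Fin 5) (Fin 5) ℤ := !![-1, 0, 0, -1, -1; 1, 0, 0, 0, 0; 0, 1, 0, 0, 0; 0, 0, 1, 0, 0; 0, 0, 0, 1, 0]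
def mS1 : Matrix (Fin 5) (Fin 5) ℤ := !![1, 0, -1, 0, 1; -1, 0, 0, -1, -1; 1, 0, 0, 0, 0; 0, 1, 0, 0, 0; 0, 0, 1, 0, 0]
def mR1 : Matrix (Fin 5) (Fin 5) ℤ := !![0, 0, 0, 0, 1; -1, -1, 0, 0, -1; 1, 0, -1, 0, 1; -1, 0, 0, -1, -1; 1, 0, 0, 0, 0]
def mN1 : Matrix (Fin 5) (Fin 5) ℤ := !![0, 0, 0, 0, 0; 0, 0, 0, 0, 0; 0, 0, 0, 0, 0; 0, 0, 0, 0, 0; 0, 0, 0, 0, 0]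
def mP1 : Matrix (Fin 5) (Fin 5) ℤ := !![-1, 2, 2, 2, 1; -1, -2, 2, 2, 1; -1, -2, -2, 2, 1; -1, -2, -2, -2, 1; -1, -2, -2, -2, -3]
def mQ1 : Matrix (Fin 5) (Fin 5) ℤ := !![0, 0, 0, 0, 0; 0, 0, 0, 0, 0; 0, 0, 0, 0, 0; 0, 0, 0, 0, 0; 0, 0, 0, 0, 0]

lemma det_mB1 : mB1 = Matrix.of fun a b => (Matrix.of fun p q => holJ (idx1 b q) (idx1 a p)).det := by
  decide +kernel

lemma kill1 (z : groupCohomology (AJ 1) 7) : 4 • z = 0 := by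
  obtain ⟨e, he⟩ := coh_model 0 5 (by decide +kernel) idx1 (by decide +kernel) mB1
    (by rw [holI_eq]; exact fun a b => congrFun (congrFun det_mB1 a) b)
  have hN := norm_mat mB1 mS1 mR1 mN1 (by decide +kernel) (by decide +kernel) (by decide +kernel)
  exact odd_cert (AJ 1) mB1 mN1 e he hN mP1 mQ1 4 1 (by decide) (by decide +kernel) 7 (by decide) z

def idx2 : Fin 10 → Fin (1 + 1) → Fin 5 := ![![0, 1], ![0, 2], ![0, 3], ![0, 4], ![1, 2], ![1, 3], ![1, 4], ![2, 3], ![2, 4], ![3, 4]]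
def mB2 : Matrix (Fin 10) (Fin 10) ℤ := !![0, 0, 1, 1, 0, 0, 0, 0, 0, 0; -1, 0, 0, 0, 0, 1, 1, 0, 0, 0; 0, -1, 0, 0, 0, 0, 0, 1, 1, 0; 0, 0, -1, 0, 0, 0, 0, 0, 0, 1; 1, 0, 0, 0, 0, 0, 0, 0, 0, 0; 0, 1, 0, 0, 0, 0, 0, 0, 0, 0; 0, 0, 1, 0, 0, 0, 0, 0, 0, 0; 0, 0, 0, 0, 1, 0, 0, 0, 0, 0; 0, 0, 0, 0, 0, 1, 0, 0, 0, 0; 0, 0, 0, 0, 0, 0, 0, 1, 0, 0]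
def mS2 : Matrix (Fin 10) (Fin 10) ℤ := !![0, -1, -1, 0, 0, 0, 0, 1, 1, 1; 0, 1, 0, -1, 0, 0, 0, 0, 0, 0; 1, 0, 0, 0, 1, 0, -1, 0, 0, 0; 0, 1, 0, 0, 0, 0, 0, 0, -1, 0; 0, 0, 1, 1, 0, 0, 0, 0, 0, 0; -1, 0, 0, 0, 0, 1, 1, 0, 0, 0; 0, -1, 0, 0, 0, 0, 0, 1, 1, 0; 1, 0, 0, 0, 0, 0, 0, 0, 0, 0; 0, 1, 0, 0, 0, 0, 0, 0, 0, 0; 0, 0, 0, 0, 1, 0, 0, 0, 0, 0]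
def mR2 : Matrix (Fin 10) (Fin 10) ℤ := !![0, 0, 0, 1, 0, 0, 1, 0, 0, 0; 0, 0, 0, -1, 0, 0, 0, 0, 1, 0; 0, 0, 0, 1, 0, 0, 0, 0, 0, 1; 0, 0, 0, -1, 0, 0, 0, 0, 0, 0; 1, 1, 0, 0, 1, 0, -1, 0, -1, 0; -1, 0, 1, 0, 0, 1, 1, 0, 0, -1; 1, 0, 0, 1, 0, 0, 0, 0, 0, 0; 0, -1, -1, 0, 0, 0, 0, 1, 1, 1; 0, 1, 0, -1, 0, 0, 0, 0, 0, 0; 0, 0, 1, 1, 0, 0, 0, 0, 0, 0]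
def mN2 : Matrix (Fin 10) (Fin 10) ℤ := !![2, 0, 0, 2, 2, 0, 0, 2, 0, 2; -2, 2, 2, -2, 0, 4, 2, 0, 2, -2; 2, 0, 0, 2, 2, 0, 0, 2, 0, 2; 0, 0, 0, 0, 0, 0, 0, 0, 0, 0; 2, 0, 0, 2, 2, 0, 0, 2, 0, 2; -2, 2, 2, -2, 0, 4, 2, 0, 2, -2; 2, 0, 0, 2, 2, 0, 0, 2, 0, 2; 2, 0, 0, 2, 2, 0, 0, 2, 0, 2; -2, 2, 2, -2, 0, 4, 2, 0, 2, -2; 2, 0, 0, 2, 2, 0, 0, 2, 0, 2]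
def mP2 : Matrix (Fin 10) (Fin 10) ℤ := !![0, 0, 0, 0, 0, 0, 0, 0, 0, 2; 0, 0, 0, 0, 0, 0, 0, 0, 2, 2; 0, 0, 0, 0, 0, 0, 0, 0, 0, 0; 0, 0, 0, 0, 0, 0, 0, 0, 0, 0; 0, 0, 0, 0, 0, 0, 0, 0, 0, 0; 0, 0, 0, 0, 0, 0, 0, 0, 0, 0; 0, 0, 0, 0, 0, 0, 0, 0, 0, 0; 0, 0, 0, 0, 0, 0, 0, 0, 0, 0; 0, 0, 0, 0, 0, 0, 0, 0, 0, 0; 0, 0, 0, 0, 0, 0, 0, 0, 0, 0]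
def mQ2 : Matrix (Fin 10) (Fin 10) ℤ := !![-4, 0, 0, -4, 0, 0, 0, 0, 0, 0; 0, -4, -4, 0, -4, -4, -4, -4, 0, 0; -4, 4, 0, -4, 0, 4, 4, 0, 0, 0; 4, -4, 0, 0, 0, -4, -4, 0, 0, 0; -4, 0, 0, -4, -4, 0, 0, 0, 0, 0; 0, -4, -4, 0, -4, -8, -4, -4, 0, 0; -4, 4, 0, -4, 0, 4, 0, 0, 0, 0; -4, 0, 0, -4, -4, 0, 0, -4, 0, 0; 0, 0, 0, 0, 0, 0, 0, 0, 0, 0; 0, 0, 0, 0, 0, 0, 0, 0, 0, 0]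

lemma det_mB2 : mB2 = Matrix.of fun a b => (Matrix.of fun p q => holJ (idx2 b q) (idx2 a p)).det := by
  decide +kernel

lemma kill2 (z : groupCohomology (AJ 2) 6) : 4 • z = 0 := by
  obtain ⟨e, he⟩ := coh_model 1 10 (by decide +kernel) idx2 (by decide +kernel) mB2
    (by rw [holI_eq]; exact fun a b => congrFun (congrFun det_mB2 a) b)
  have hN := norm_mat mB2 mS2 mR2 mN2 (by decide +kernel) (by decide +kernel) (by decide +kernel)
  exact even_cert (AJ 2) mB2 mN2 e he hN mP2 mQ2 4 1 (by decide) (by decide +kernel) 6 (by decide) z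

def idx3 : Fin 10 → Fin (2 + 1) → Fin 5 := ![![0, 1, 2], ![0, 1, 3], ![0, 1, 4], ![0, 2, 3], ![0, 2, 4], ![0, 3, 4], ![1, 2, 3], ![1, 2, 4], ![1, 3, 4], ![2, 3, 4]]
def mB3 : Matrix (Fin 10) (Fin 10) ℤ := !![0, -1, -1, 0, 0, 0, 0, 0, 0, 0; 0, 0, 0, -1, -1, 0, 0, 0, 0, 0; 0, 0, 0, 0, 0, -1, 0, 0, 0, 0; -1, 0, 0, 0, 0, 0, -1, -1, 0, 0; 0, -1, 0, 0, 0, 0, 0, 0, -1, 0; 0, 0, 0, -1, 0, 0, 0, 0, 0, -1; 1, 0, 0, 0, 0, 0, 0, 0, 0, 0; 0, 1, 0, 0, 0, 0, 0, 0, 0, 0; 0, 0, 0, 1, 0, 0, 0, 0, 0, 0; 0, 0, 0, 0, 0, 0, 1, 0, 0, 0]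
def mS3 : Matrix (Fin 10) (Fin 10) ℤ := !![0, 0, 0, 1, 1, 1, 0, 0, 0, 0; 1, 1, 0, 0, 0, 0, 1, 1, 1, 0; 0, 0, 0, 1, 0, 0, 0, 0, 0, 1; -1, 0, 1, 0, 0, 0, 0, 0, 0, 0; 0, 0, 0, 0, 1, 0, 0, 0, 0, 0; 1, 0, 0, 0, 0, 0, 0, 1, 0, 0; 0, -1, -1, 0, 0, 0, 0, 0, 0, 0; 0, 0, 0, -1, -1, 0, 0, 0, 0, 0; -1, 0, 0, 0, 0, 0, -1, -1, 0, 0; 1, 0, 0, 0, 0, 0, 0, 0, 0, 0]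
def mR3 : Matrix (Fin 10) (Fin 10) ℤ := !![0, 0, 1, 0, 1, 0, 0, 1, 0, 0; 0, 0, -1, 0, 0, 1, 0, 0, 1, 0; 0, 0, 1, 0, 0, 0, 0, 0, 0, 0; 0, 0, 0, 0, -1, -1, 0, 0, 0, 1; 0, 0, 0, 0, 1, 0, 0, 0, 0, 0; 0, 0, 0, 0, 0, 1, 0, 0, 0, 0; -1, -1, 0, -1, 0, 0, -1, -1, -1, -1; 1, 0, -1, 0, -1, 0, 0, 0, 0, 0; 0, 1, 1, 0, 0, -1, 0, 0, 0, 0; 0, 0, 0, 1, 1, 1, 0, 0, 0, 0]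
def mN3 : Matrix (Fin 10) (Fin 10) ℤ := !![0, -2, 0, 0, 2, 0, 0, 0, -2, 0; 2, 2, -2, -2, -2, 2, 0, 2, 2, -2; -2, 0, 2, 2, 0, -2, 0, -2, 0, 2; -2, 2, 2, 2, -2, -2, 0, -2, 2, 2; 0, -4, 0, 0, 4, 0, 0, 0, -4, 0; 2, 0, -2, -2, 0, 2, 0, 2, 0, -2; 0, -2, 0, 0, 2, 0, 0, 0, -2, 0; 2, 2, -2, -2, -2, 2, 0, 2, 2, -2; -2, 2, 2, 2, -2, -2, 0, -2, 2, 2; 0, -2, 0, 0, 2, 0, 0, 0, -2, 0]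
def mP3 : Matrix (Fin 10) (Fin 10) ℤ := !![0, 0, 0, 0, 0, 0, 4, 0, 0, 4; 0, 0, 0, -4, 0, 0, -4, 4, -4, -8; 0, 0, -4, 0, 0, 4, 0, 0, 4, 0; 0, 0, 0, 0, 0, 0, 0, 0, 4, 0; 0, 0, 0, 4, -4, 0, 4, -4, 4, 8; 0, 0, 0, 0, 0, -4, 0, 0, -4, 0; 0, 0, 0, 0, 0, 0, 0, 0, 0, 4; 0, 0, 0, -4, 0, 0, -4, 0, -4, -8; 0, 0, 0, 0, 0, 0, 0, 0, 0, 0; 0, 0, 0, 0, 0, 0, 0, 0, 0, 0]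
def mQ3 : Matrix (Fin 10) (Fin 10) ℤ := !![4, 4, 0, 0, 0, 0, 0, 0, 0, 0; -4, 0, 0, 0, 0, 0, 0, 0, 0, 0; 0, 0, 0, 0, 0, 0, 0, 0, 0, 0; 0, 0, 0, 0, 0, 0, 0, 0, 0, 0; 0, 0, 0, 0, 0, 0, 0, 0, 0, 0; 0, 0, 0, 0, 0, 0, 0, 0, 0, 0; 0, 0, 0, 0, 0, 0, 0, 0, 0, 0; 0, 0, 0, 0, 0, 0, 0, 0, 0, 0; 0, 0, 0, 0, 0, 0, 0, 0, 0, 0; 0, 0, 0, 0, 0, 0, 0, 0, 0, 0]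

lemma det_mB3 : mB3 = Matrix.of fun a b => (Matrix.of fun p q => holJ (idx3 b q) (idx3 a p)).det := by
  decide +kernel

lemma kill3 (z : groupCohomology (AJ 3) 5) : 4 • z = 0 := by
  obtain ⟨e, he⟩ := coh_model 2 10 (by decide +kernel) idx3 (by decide +kernel) mB3
    (by rw [holI_eq]; exact fun a b => congrFun (congrFun det_mB3 a) b)
  have hN := norm_mat mB3 mS3 mR3 mN3 (by decide +kernel) (by decide +kernel) (by decide +kernel)
  exact odd_cert (AJ 3) mB3 mN3 e he hN mP3 mQ3 4 2 (by decide) (by decide +kernel) 5 (by decide) z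

def idx4 : Fin 5 → Fin (3 + 1) → Fin 5 := ![![0, 1, 2, 3], ![0, 1, 2, 4], ![0, 1, 3, 4], ![0, 2, 3, 4], ![1, 2, 3, 4]]
def mB4 : Matrix (Fin 5) (Fin 5) ℤ := !![1, 1, 0, 0, 0; 0, 0, 1, 0, 0; 0, 0, 0, 1, 0; -1, 0, 0, 0, 1; 1, 0, 0, 0, 0]
def mS4 : Matrix (Fin 5) (Fin 5) ℤ := !![1, 1, 1, 0, 0; 0, 0, 0, 1, 0; -1, 0, 0, 0, 1; 0, -1, 0, 0, 0; 1, 1, 0, 0, 0]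
def mR4 : Matrix (Fin 5) (Fin 5) ℤ := !![0, 1, 1, 1, 1; 0, -1, 0, 0, 0; 0, 0, -1, 0, 0; 0, 0, 0, -1, 0; 1, 1, 1, 1, 0]
def mN4 : Matrix (Fin 5) (Fin 5) ℤ := !![4, 4, 4, 4, 4; 0, 0, 0, 0, 0; 0, 0, 0, 0, 0; 0, 0, 0, 0, 0; 4, 4, 4, 4, 4]
def mP4 : Matrix (Fin 5) (Fin 5) ℤ := !![0, 0, 0, 0, 1; 0, 0, 0, 0, 0; 0, 0, 0, 0, 0; 0, 0, 0, 0, 0; 0, 0, 0, 0, 0]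
def mQ4 : Matrix (Fin 5) (Fin 5) ℤ := !![-4, -4, -4, -4, 0; 4, 0, 0, 0, 0; 4, 4, 0, 0, 0; 4, 4, 4, 0, 0; 0, 0, 0, 0, 0]

lemma det_mB4 : mB4 = Matrix.of fun a b => (Matrix.of fun p q => holJ (idx4 b q) (idx4 a p)).det := by
  decide +kernel

lemma kill4 (z : groupCohomology (AJ 4) 4) : 4 • z = 0 := by
  obtain ⟨e, he⟩ := coh_model 3 5 (by decide +kernel) idx4 (by decide +kernel) mB4
    (by rw [holI_eq]; exact fun a b => congrFun (congrFun det_mB4 a) b)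
  have hN := norm_mat mB4 mS4 mR4 mN4 (by decide +kernel) (by decide +kernel) (by decide +kernel)
  exact even_cert (AJ 4) mB4 mN4 e he hN mP4 mQ4 4 1 (by decide) (by decide +kernel) 4 (by decide) z

def idx5 : Fin 1 → Fin (4 + 1) → Fin 5 := ![![0, 1, 2, 3, 4]]
def mB5 : Matrix (Fin 1) (Fin 1) ℤ := !![-1]
def mS5 : Matrix (Fin 1) (Fin 1) ℤ := !![1]
def mR5 : Matrix (Fin 1) (Fin 1) ℤ := !![1]
def mN5 : Matrix (Fin 1) (Fin 1) ℤ := !![0]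
def mP5 : Matrix (Fin 1) (Fin 1) ℤ := !![-2]
def mQ5 : Matrix (Fin 1) (Fin 1) ℤ := !![0]

lemma det_mB5 : mB5 = Matrix.of fun a b => (Matrix.of fun p q => holJ (idx5 b q) (idx5 a p)).det := by
  decide +kernel

lemma kill5 (z : groupCohomology (AJ 5) 3) : 4 • z = 0 := by
  obtain ⟨e, he⟩ := coh_model 4 1 (by decide +kernel) idx5 (by decide +kernel) mB5
    (by rw [holI_eq]; exact fun a b => congrFun (congrFun det_mB5 a) b)
  have hN := norm_mat mB5 mS5 mR5 mN5 (by decide +kernel) (by decide +kernel) (by decide +kernel)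
  exact odd_cert (AJ 5) mB5 mN5 e he hN mP5 mQ5 4 1 (by decide) (by decide +kernel) 3 (by decide) z

end CE

end


section
open Matrix CategoryTheory groupCohomology

namespace CE

lemma high_zero (i j : ℕ) (hj : 5 < j) (z : groupCohomology (AJ j) i) : z = 0 := by
  refine sub_coh (AJ j) ?_ i z
  have hg := gen_lat 5 LL ⟨MulEquiv.refl _⟩ j
  rw [Nat.choose_eq_zero_of_lt hj] at hg
  obtain ⟨f, hf⟩ := hg
  exact hf.subsingleton

lemma kill_all (i j : ℕ) (hij : i + j = 8) (hj : j ≠ 0) (z : groupCohomology (AJ j) i) : 4 • z = 0 := by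
  by_cases h5 : 5 < j
  · rw [high_zero i j h5 z, smul_zero]
  · have : j = 1 ∨ j = 2 ∨ j = 3 ∨ j = 4 ∨ j = 5 := by omega
    rcases this with rfl | rfl | rfl | rfl | rfl
    · obtain rfl : i = 7 := by omega
      exact kill1 z
    · obtain rfl : i = 6 := by omega
      exact kill2 z
    · obtain rfl : i = 5 := by omega
      exact kill3 z
    · obtain rfl : i = 4 := by omega
      exact kill4 z
    · obtain rfl : i = 3 := by omega
      exact kill5 z

lemma rhs : ∃ r : groupCohomology (AJ 0) 8, ∀ z : groupCohomology (AJ 0) 8, 4 • z = 0 ∨ 4 • z = r :=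
  coh8 (AJ 0) (gen_zero LL)

theorem final (e : H 8 ≃+ ((p : {p : ℕ × ℕ // p.1 + p.2 = 8}) → Hc p.1.1 p.1.2)) : False := by
  obtain ⟨r, hr⟩ := rhs
  let p0 : {p : ℕ × ℕ // p.1 + p.2 = 8} := ⟨(8, 0), rfl⟩
  have key : ∀ x y : H 8, e (4 • x) p0 = e (4 • y) p0 → 4 • x = 4 • y := by
    intro x y h
    apply e.injective
    funext p
    by_cases hp : p = p0
    · rw [hp]; exact h
    · have hj : p.1.2 ≠ 0 := by
        intro h0
        apply hp
        have := p.2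
        exact Subtype.ext (Prod.ext (by show p.1.1 = 8; omega) h0)
      have hz : ∀ x : H 8, e (4 • x) p = 0 := by
        intro x
        rw [map_nsmul]
        exact kill_all p.1.1 p.1.2 p.2 hj _
      rw [hz, hz]
  have val : ∀ x : H 8, e (4 • x) p0 = 0 ∨ e (4 • x) p0 = r := by
    intro x
    rw [map_nsmul]
    exact hr _
  have hz : e (4 • (0 : H 8)) p0 = 0 := by rw [smul_zero, map_zero]; rfl
  obtain ⟨a, b, ha, hb, hab⟩ := lhs
  rcases val a with h1 | h1
  · exact ha ((key a 0 (h1.trans hz.symm)).trans (smul_zero _))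
  · rcases val b with h2 | h2
    · exact hb ((key b 0 (h2.trans hz.symm)).trans (smul_zero _))
    · exact hab (key a b (h1.trans h2.symm))

end CE

end

theorem Z8_example_fails_conjecture :
    ∃ k : ℕ, ¬ Nonempty
      (H k ≃+ ((p : {p : ℕ × ℕ // p.1 + p.2 = k}) → Hc p.1.1 p.1.2)) := by
  exact ⟨8, fun ⟨e⟩ => CE.final e⟩
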